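/- arXiv:1908.09385 — 5 statements merged into one kernel-verified Lean document; each statement's English description precedes it below -/
import Mathlib

section
/- Let b = sqrt(3/8) and define Ω(x) = -2bx/(x²+b²)², U(x) = x/(x²+b²) and U_x(x) = (b²-x²)/(x²+b²)². Then (i) U is differentiable on ℝ with U'(x) = U_x(x) for all x ∈ ℝ, and (ii) Ω is differentiable and satisfies the self-similar profile equation ( (x/3) + (1/2)·U(x) ) · Ω'(x) = ( -1 + U_x(x) ) · Ω(x) for all x ∈ ℝ. -/
open Real

noncomputable def bb : ℝ := Real.sqrt (3/8)

noncomputable def Ω (x : ℝ) : ℝ := -2 * bb * x / (x^2 + bb^2)^2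

noncomputable def U (x : ℝ) : ℝ := x / (x^2 + bb^2)

noncomputable def Ux (x : ℝ) : ℝ := (bb^2 - x^2) / (x^2 + bb^2)^2

/-- The explicit analytic self-similar profile of gCLM with `a = 1/2`:
`U` has derivative `Ux`, `Ω` is differentiable, and the self-similar profile
equation `(x/3 + U/2) Ω' = (-1 + Ux) Ω` holds. -/
theorem selfSimilar_profile_a_half :
    (∀ x : ℝ, HasDerivAt U (Ux x) x) ∧
    Differentiable ℝ Ω ∧
    (∀ x : ℝ, (x / 3 + (1/2) * U x) * deriv Ω x = (-1 + Ux x) * Ω x) := by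
  have hb : bb ^ 2 = 3 / 8 := by
    unfold bb
    exact Real.sq_sqrt (by norm_num)
  have hD : ∀ x : ℝ, x ^ 2 + bb ^ 2 ≠ 0 := by
    intro x
    rw [hb]
    positivity
  have hq : ∀ x : ℝ, HasDerivAt (fun y : ℝ => y ^ 2 + bb ^ 2) (2 * x) x := by
    intro x
    simpa using (hasDerivAt_pow 2 x).add_const (bb ^ 2)
  have hΩ : ∀ x : ℝ, HasDerivAt Ω
      (-2 * bb * (bb ^ 2 - 3 * x ^ 2) / (x ^ 2 + bb ^ 2) ^ 3) x := by
    intro x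
    have h := ((hasDerivAt_id' x).const_mul (-2 * bb)).fun_div ((hq x).fun_pow 2)
      (pow_ne_zero 2 (hD x))
    refine h.congr_deriv ?_
    have := hD x
    field_simp
    push_cast
    ring
  refine ⟨?_, fun x => (hΩ x).differentiableAt, ?_⟩
  · intro x
    refine ((hasDerivAt_id' x).fun_div (hq x) (hD x)).congr_deriv ?_
    unfold Ux
    congr 1
    ring
  · intro x
    rw [(hΩ x).deriv]
    unfold U Ux Ω
    have := hD x
    have key : ((x ^ 2 + bb ^ 2) / 3 + 1 / 2) * (bb ^ 2 - 3 * x ^ 2)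
        = -(x ^ 2 + bb ^ 2) ^ 2 + (bb ^ 2 - x ^ 2) := by
      rw [hb]
      ring
    have e1 : (x / 3 + 1 / 2 * (x / (x ^ 2 + bb ^ 2))) *
        (-2 * bb * (bb ^ 2 - 3 * x ^ 2) / (x ^ 2 + bb ^ 2) ^ 3)
        = -2 * bb * x * (((x ^ 2 + bb ^ 2) / 3 + 1 / 2) * (bb ^ 2 - 3 * x ^ 2))
          / (x ^ 2 + bb ^ 2) ^ 4 := by
      field_simp
    rw [e1, key]
    field_simp
end

section
/- (Tricomi identity) Let ω: ℝ → ℝ be a Schwartz function. Then for every x ∈ ℝ, H(ω·Hω)(x) = (1/2)·( (Hω)(x)² − ω(x)² ), where both Hilbert transforms are defined by the principal value formula and all the principal value limits involved exist. -/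
open MeasureTheory Filter Real Set

/-- `HilbertAt f x L` means the principal-value Hilbert transform
`(1/π) P.V. ∫ f(y)/(x-y) dy` exists at `x` and equals `L`. -/
def HilbertAt (f : ℝ → ℝ) (x L : ℝ) : Prop :=
  Filter.Tendsto
    (fun ε : ℝ => (1 / Real.pi) * ∫ y in {y : ℝ | ε < |x - y|}, f y / (x - y))
    (nhdsWithin 0 (Set.Ioi 0)) (nhds L)

/-- The sine integral. -/
noncomputable def SI (u : ℝ) : ℝ := ∫ t in (0:ℝ)..u, sinc t

lemma SI_continuous : Continuous SI :=
  intervalIntegral.continuous_primitive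
    (fun a b => continuous_sinc.intervalIntegrable a b) 0

lemma SI_zero : SI 0 = 0 := by simp [SI]

lemma SI_neg (u : ℝ) : SI (-u) = - SI u := by
  unfold SI
  have h := intervalIntegral.integral_comp_neg (a := 0) (b := u) (fun t => sinc t)
  simp only [sinc_neg, neg_zero] at h
  rw [h, intervalIntegral.integral_symm]

lemma SI_abs_le (u : ℝ) : |SI u| ≤ |u| := by
  have h := intervalIntegral.norm_integral_le_of_norm_le_const (a := 0) (b := u) (C := 1)
    (f := sinc) (fun t _ => by simpa using abs_sinc_le_one t)
  simpa [SI] using h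

lemma inner_sinc {t : ℝ} (ht : 0 < t) :
    ∫ s in Ioi (0:ℝ), exp (-t * s) * sin t = sinc t := by
  rw [integral_mul_const, integral_exp_mul_Ioi (by linarith), sinc_of_ne_zero ht.ne']
  simp
  ring

lemma inner_laplace (s R : ℝ) :
    ∫ t in (0:ℝ)..R, exp (-t * s) * sin t =
      (1 + s ^ 2)⁻¹ - exp (-R * s) * (cos R + s * sin R) * (1 + s ^ 2)⁻¹ := by
  have hs : (1 + s ^ 2) ≠ 0 := by positivity
  have hd : ∀ t ∈ uIcc 0 R, HasDerivAt
      (fun t => - (exp (-t * s) * (cos t + s * sin t) * (1 + s ^ 2)⁻¹))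
      (exp (-t * s) * sin t) t := by
    intro t _
    have h1 : HasDerivAt (fun t : ℝ => exp (-t * s)) (exp (-t * s) * (-1 * s)) t :=
      (((hasDerivAt_id t).neg).mul_const s).exp
    have h2 : HasDerivAt (fun t : ℝ => cos t + s * sin t) (-sin t + s * cos t) t :=
      (hasDerivAt_cos t).add ((hasDerivAt_sin t).const_mul s)
    have h3 := ((h1.mul h2).mul_const ((1 + s ^ 2)⁻¹)).neg
    refine h3.congr_deriv ?_
    field_simp
    ring
  rw [intervalIntegral.integral_eq_sub_of_hasDerivAt hd
    (Continuous.intervalIntegrable (by fun_prop) _ _)]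
  simp
  ring

lemma SI_sub_le {R : ℝ} (hR : 0 < R) : |SI R - π / 2| ≤ 2 / R := by
  have hint : Integrable (Function.uncurry fun t s : ℝ => exp (-t * s) * sin t)
      ((volume.restrict (Ioc 0 R)).prod (volume.restrict (Ioi 0))) := by
    rw [integrable_prod_iff (Continuous.aestronglyMeasurable (by fun_prop))]
    constructor
    · filter_upwards [ae_restrict_mem measurableSet_Ioc] with t ht
      simp only [Function.uncurry]
      exact (integrableOn_exp_mul_Ioi (a := -t) (by linarith [ht.1]) 0).mul_const (sin t)
    · have : IntegrableOn (fun t => |sinc t|) (Ioc 0 R) :=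
        (continuous_sinc.abs.integrableOn_Icc).mono_set Ioc_subset_Icc_self
      refine this.congr ?_
      filter_upwards [ae_restrict_mem measurableSet_Ioc] with t ht
      simp only [Function.uncurry, norm_mul, norm_eq_abs, abs_exp]
      rw [integral_mul_const, integral_exp_mul_Ioi (by linarith [ht.1]), sinc_of_ne_zero ht.1.ne',
        abs_div, abs_of_pos ht.1]
      simp
      ring
  have h1 : SI R = ∫ s in Ioi (0:ℝ), ∫ t in Ioc 0 R, exp (-t * s) * sin t := by
    rw [← integral_integral_swap hint, SI, intervalIntegral.integral_of_le hR.le]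
    refine setIntegral_congr_fun measurableSet_Ioc fun t ht => ?_
    exact (inner_sinc ht.1).symm
  have h2 : IntegrableOn (fun s : ℝ => exp (-R * s) * (cos R + s * sin R) * (1 + s ^ 2)⁻¹)
      (Ioi 0) ∧ ∀ s ∈ Ioi (0:ℝ), ‖exp (-R * s) * (cos R + s * sin R) * (1 + s ^ 2)⁻¹‖
        ≤ 2 * exp (-R * s) := by
    have hb : ∀ s ∈ Ioi (0:ℝ), ‖exp (-R * s) * (cos R + s * sin R) * (1 + s ^ 2)⁻¹‖
        ≤ 2 * exp (-R * s) := by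
      intro s hs
      have hs' : (0:ℝ) < s := hs
      rw [norm_mul, norm_mul, norm_eq_abs, norm_eq_abs, norm_eq_abs, abs_exp,
        abs_of_pos (by positivity : (0:ℝ) < (1 + s^2)⁻¹), ← div_eq_mul_inv,
        div_le_iff₀ (by positivity)]
      have : |cos R + s * sin R| ≤ 2 * (1 + s ^ 2) := by
        have a1 := abs_add_le (cos R) (s * sin R)
        have a2 := abs_cos_le_one R
        have a3 : |s * sin R| ≤ s := by
          rw [abs_mul, abs_of_pos hs']
          exact mul_le_of_le_one_right hs'.le (abs_sin_le_one R)
        nlinarith [sq_nonneg (s - 1)]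
      nlinarith [exp_pos (-R * s)]
    refine ⟨?_, hb⟩
    refine Integrable.mono' ((integrableOn_exp_mul_Ioi (a := -R) (by linarith) 0).const_mul 2) ?_ ?_
    · refine Continuous.aestronglyMeasurable ?_
      have : ∀ s : ℝ, 1 + s ^ 2 ≠ 0 := fun s => by positivity
      fun_prop (disch := assumption)
    · filter_upwards [ae_restrict_mem measurableSet_Ioi] with s hs using hb s hs
  have h3 : SI R - π / 2 =
      - ∫ s in Ioi (0:ℝ), exp (-R * s) * (cos R + s * sin R) * (1 + s ^ 2)⁻¹ := by
    rw [h1]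
    simp_rw [← intervalIntegral.integral_of_le hR.le, inner_laplace]
    rw [integral_sub integrable_inv_one_add_sq.integrableOn h2.1, integral_Ioi_inv_one_add_sq]
    simp
  rw [h3, abs_neg]
  have h4 := norm_integral_le_of_norm_le (μ := volume.restrict (Ioi (0:ℝ)))
    ((integrableOn_exp_mul_Ioi (a := -R) (by linarith) 0).const_mul 2)
    ((ae_restrict_mem measurableSet_Ioi).mono fun s hs => h2.2 s hs)
  rw [integral_const_mul, integral_exp_mul_Ioi (by linarith)] at h4
  rw [← norm_eq_abs]
  refine h4.trans (le_of_eq ?_)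
  simp
  ring

lemma SI_tendsto : Tendsto SI atTop (nhds (π / 2)) := by
  rw [tendsto_iff_norm_sub_tendsto_zero]
  refine squeeze_zero' (g := fun R => 2 / R) (Eventually.of_forall fun _ => norm_nonneg _) ?_
    (tendsto_const_nhds.div_atTop tendsto_id)
  filter_upwards [eventually_gt_atTop 0] with R hR using SI_sub_le hR

lemma SI_bdd (u : ℝ) : |SI u| ≤ 4 := by
  have key : ∀ u : ℝ, 0 ≤ u → |SI u| ≤ 4 := by
    intro u hu
    rcases le_or_gt u 2 with h | h
    · have := SI_abs_le u
      rw [abs_of_nonneg hu] at this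
      linarith
    · have h1 := SI_sub_le (by linarith : 0 < u)
      have h2 : 2 / u ≤ 1 := by rw [div_le_one (by linarith)]; exact h.le
      have := pi_pos
      have := pi_le_four
      rw [abs_le] at h1 ⊢
      constructor <;> linarith [h1.1, h1.2]
  rcases le_total 0 u with h | h
  · exact key u h
  · have := key (-u) (by linarith)
    rwa [SI_neg, abs_neg] at this

lemma SI_tendsto_mul (p : ℝ) :
    Tendsto (fun R => SI (R * p)) atTop (nhds (π / 2 * SignType.sign p)) := by
  rcases lt_trichotomy p 0 with h | h | h
  · have h1 : Tendsto (fun R : ℝ => R * (-p)) atTop atTop :=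
      tendsto_id.atTop_mul_const (by linarith)
    have := (SI_tendsto.comp h1).neg
    simp only [Function.comp_def, mul_neg, SI_neg, neg_neg] at this
    simpa [sign_neg h] using this
  · simp [h, SI_zero]
  · have h1 : Tendsto (fun R : ℝ => R * p) atTop atTop :=
      tendsto_id.atTop_mul_const h
    simpa [sign_pos h, Function.comp_def] using SI_tendsto.comp h1

lemma trunc_fold (g : ℝ → ℂ) (hg : Integrable g) (x : ℝ) {ε : ℝ} (hε : 0 < ε) :
    IntegrableOn (fun t : ℝ => (g (x - t) - g (x + t)) / t) (Ioi ε) ∧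
    ∫ y in {y : ℝ | ε < |x - y|}, g y / ((x - y : ℝ) : ℂ) =
      ∫ t in Ioi ε, (g (x - t) - g (x + t)) / t := by
  have hb : ∀ (h : ℝ → ℂ), Integrable h → ∀ s : Set ℝ, MeasurableSet s → (∀ t ∈ s, ε ≤ |t|) →
      IntegrableOn (fun t : ℝ => h t / t) s := by
    intro h hh s hs hst
    have : IntegrableOn (fun t : ℝ => ((t : ℂ)⁻¹) * h t) s := by
      refine Integrable.bdd_mul (c := ε⁻¹) hh.integrableOn ?_ ?_
      · exact (Measurable.inv (by fun_prop)).aestronglyMeasurable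
      · filter_upwards [ae_restrict_mem hs] with t ht
        rw [norm_inv, Complex.norm_real, norm_eq_abs]
        exact inv_anti₀ hε (hst t ht)
    refine this.congr (Eventually.of_forall fun t => ?_)
    simp only []
    rw [div_eq_mul_inv, mul_comm]
  have h1 : Integrable (fun t => g (x - t)) := hg.comp_sub_left x
  have h2 : Integrable (fun t => g (x + t)) := hg.comp_add_left x
  have i1 := hb _ h1 (Ioi ε) measurableSet_Ioi (fun t ht => (le_of_lt ht).trans (le_abs_self t))
  have i1' := hb _ h1 (Iic (-ε)) measurableSet_Iic
    (fun t ht => (by linarith [mem_Iic.1 ht] : ε ≤ -t).trans (neg_le_abs t))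
  have i2 := hb _ h2 (Ioi ε) measurableSet_Ioi (fun t ht => (le_of_lt ht).trans (le_abs_self t))
  constructor
  · refine (i1.sub i2).congr (Eventually.of_forall fun t => ?_)
    simp [sub_div]
  · have hm : MeasurableSet {y : ℝ | ε < |x - y|} :=
      measurableSet_lt measurable_const (by fun_prop)
    have hm' : MeasurableSet {t : ℝ | ε < |t|} := measurableSet_lt measurable_const (by fun_prop)
    have e1 : ∫ y in {y : ℝ | ε < |x - y|}, g y / ((x - y : ℝ) : ℂ) =
        ∫ t in {t : ℝ | ε < |t|}, g (x - t) / (t : ℂ) := by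
      rw [← integral_indicator hm, ← integral_indicator hm',
        ← integral_sub_left_eq_self _ volume x]
      congr 1
      ext t
      simp [indicator]
    have e2 : ({t : ℝ | ε < |t|} : Set ℝ) =ᵐ[volume] (Ioi ε ∪ Iic (-ε) : Set ℝ) := by
      have : ({t : ℝ | ε < |t|} : Set ℝ) = Ioi ε ∪ Iio (-ε) := by
        ext t
        simp only [mem_ofPred_eq, lt_abs, mem_union, mem_Ioi, mem_Iio]
        constructor <;> rintro (h | h) <;> [left; right; left; right] <;> linarith
      rw [this]
      exact (ae_eq_refl _).union Iio_ae_eq_Iic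
    rw [e1, setIntegral_congr_set e2, setIntegral_union ?_ measurableSet_Iic i1 i1',
      ← integral_comp_neg_Ioi]
    · simp only [sub_div]
      rw [integral_sub i1 i2, sub_eq_add_neg, ← integral_neg]
      congr 2
      ext t
      simp [div_neg]
    · rw [Set.disjoint_left]
      intro t ht ht'
      simp only [mem_Ioi, mem_Iic] at ht ht'
      linarith

lemma exp_diff (x t p : ℝ) :
    (Complex.exp (Complex.I * ((x - t : ℝ) * p)) - Complex.exp (Complex.I * ((x + t : ℝ) * p))) / t
      = Complex.exp (Complex.I * (x * p)) * (-2 * Complex.I) * ((sin (t * p) / t : ℝ) : ℂ) := by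
  have e1 : Complex.I * ((x - t : ℝ) * p) = Complex.I * (x * p) + (-(t * p : ℂ)) * Complex.I := by
    push_cast; ring
  have e2 : Complex.I * ((x + t : ℝ) * p) = Complex.I * (x * p) + (t * p : ℂ) * Complex.I := by
    push_cast; ring
  rw [e1, e2, Complex.exp_add, Complex.exp_add]
  push_cast
  rw [Complex.sin]
  linear_combination (Complex.exp (Complex.I * (x * p)) * (Complex.exp (-(t * p : ℂ) * Complex.I)
    - Complex.exp ((t * p : ℂ) * Complex.I)) / t) * Complex.I_sq

lemma trunc_inner (p : ℝ) {ε R : ℝ} (hε : 0 < ε) (hR : ε ≤ R) :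
    ∫ t in Ioc ε R, sin (t * p) / t = SI (R * p) - SI (ε * p) := by
  have h := intervalIntegral.mul_integral_comp_mul_left (a := ε) (b := R) (f := sinc) (c := p)
  have h2 : ∫ t in Ioc ε R, sin (t * p) / t = p * ∫ t in ε..R, sinc (p * t) := by
    rw [intervalIntegral.integral_of_le hR, ← integral_const_mul]
    refine setIntegral_congr_fun measurableSet_Ioc fun t ht => ?_
    have ht : 0 < t := hε.trans ht.1
    by_cases hp : p = 0
    · simp [hp]
    · rw [sinc_of_ne_zero (by positivity), mul_comm t p]
      field_simp
  rw [h2, h, SI, SI, mul_comm R, mul_comm ε, intervalIntegral.integral_interval_sub_left] <;>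
    exact continuous_sinc.intervalIntegrable _ _

lemma norm_e (x p : ℝ) : ‖Complex.exp (Complex.I * (x * p))‖ = 1 := by
  rw [mul_comm]
  exact_mod_cast Complex.norm_exp_ofReal_mul_I (x * p)

section PV
variable {α : Type*} [MeasurableSpace α] (μ : Measure α) [SFinite μ]

lemma trunc_eq (G : α → ℂ) (hG : Integrable G μ) (φ : α → ℝ) (hφ : Measurable φ)
    (g : ℝ → ℂ) (hg : ∀ y, g y = ∫ a, G a * Complex.exp (Complex.I * (y * φ a)) ∂μ)
    (x : ℝ) {ε R : ℝ} (hε : 0 < ε) (hR : ε ≤ R) :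
    ∫ t in ε..R, (g (x - t) - g (x + t)) / t =
      ∫ a, (G a * (Complex.exp (Complex.I * (x * φ a)) * (-2 * Complex.I))) *
        ((SI (R * φ a) - SI (ε * φ a) : ℝ) : ℂ) ∂μ := by
  have hGe : ∀ y : ℝ, Integrable (fun a => G a * Complex.exp (Complex.I * (y * φ a))) μ := by
    intro y
    refine hG.mul_bdd (c := 1) (by fun_prop) ?_
    exact Eventually.of_forall fun a => (norm_e y (φ a)).le
  have hint : Integrable (Function.uncurry fun (t : ℝ) (a : α) =>
      (G a * (Complex.exp (Complex.I * (x * φ a)) * (-2 * Complex.I))) *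
        ((sin (t * φ a) / t : ℝ) : ℂ)) ((volume.restrict (Ioc ε R)).prod μ) := by
    have h0 : Integrable (fun z : ℝ × α => (1 : ℂ) *
      (G z.2 * Complex.exp (Complex.I * (x * φ z.2)))) ((volume.restrict (Ioc ε R)).prod μ) :=
      Integrable.mul_prod (f := fun _ : ℝ => (1 : ℂ)) (integrable_const _) (hGe x)
    have h1 := h0.mul_bdd (c := 2 * ε⁻¹) (g := fun z : ℝ × α => (-2 * Complex.I) *
        ((sin (z.1 * φ z.2) / z.1 : ℝ) : ℂ))
      (Measurable.aestronglyMeasurable (by fun_prop)) ?_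
    · refine h1.congr (Eventually.of_forall fun z => ?_)
      simp only [Function.uncurry]
      ring
    · have hae : ∀ᵐ z : ℝ × α ∂((volume.restrict (Ioc ε R)).prod μ), z.1 ∈ Ioc ε R :=
        Measure.quasiMeasurePreserving_fst.ae (ae_restrict_mem measurableSet_Ioc)
      filter_upwards [hae] with z hz
      have hz0 : 0 < z.1 := hε.trans hz.1
      rw [norm_mul, Complex.norm_real, norm_div, norm_eq_abs, norm_eq_abs, abs_of_pos hz0,
        div_eq_mul_inv]
      have : ‖(-2 * Complex.I)‖ = 2 := by simp
      rw [this]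
      have h3 : |sin (z.1 * φ z.2)| * z.1⁻¹ ≤ 1 * ε⁻¹ :=
        mul_le_mul (abs_sin_le_one _) (inv_anti₀ hε hz.1.le) (by positivity) zero_le_one
      linarith
  rw [intervalIntegral.integral_of_le hR]
  calc ∫ t in Ioc ε R, (g (x - t) - g (x + t)) / t
      = ∫ t in Ioc ε R, ∫ a, (G a * (Complex.exp (Complex.I * (x * φ a)) * (-2 * Complex.I))) *
        ((sin (t * φ a) / t : ℝ) : ℂ) ∂μ := by
        refine setIntegral_congr_fun measurableSet_Ioc fun t ht => ?_
        rw [hg, hg, ← integral_sub (hGe _) (hGe _), ← integral_div]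
        congr 1
        ext a
        rw [mul_assoc (G a), ← exp_diff]
        ring
    _ = _ := by
        rw [integral_integral_swap hint]
        congr 1
        ext a
        rw [integral_const_mul, integral_complex_ofReal, trunc_inner (φ a) hε hR]

lemma pv_main (G : α → ℂ) (hG : Integrable G μ) (φ : α → ℝ) (hφ : Measurable φ)
    (g : ℝ → ℂ) (hg : ∀ y, g y = ∫ a, G a * Complex.exp (Complex.I * (y * φ a)) ∂μ)
    (hgi : Integrable g) (x : ℝ) :
    Tendsto (fun ε : ℝ => (1 / (π : ℂ)) *
        ∫ y in {y : ℝ | ε < |x - y|}, g y / ((x - y : ℝ) : ℂ))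
      (nhdsWithin 0 (Ioi 0))
      (nhds (∫ a, G a * Complex.exp (Complex.I * (x * φ a)) *
        (-Complex.I * ((SignType.sign (φ a) : ℝ) : ℂ)) ∂μ)) := by
  have hsgn : Measurable (fun a => ((SignType.sign (φ a) : ℝ) : ℂ)) := by
    have h1 : Measurable (fun p : ℝ => ((SignType.sign p : SignType) : ℝ)) := by
      have : (fun p : ℝ => ((SignType.sign p : SignType) : ℝ)) =
          fun p => if 0 < p then (1:ℝ) else if p < 0 then -1 else 0 := by
        ext p
        rcases lt_trichotomy p 0 with h | h | h
        · simp [sign_neg h, h, h.le.not_gt]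
        · simp [h]
        · simp [sign_pos h, h]
      rw [this]
      refine Measurable.ite measurableSet_Ioi measurable_const
        (Measurable.ite measurableSet_Iio measurable_const measurable_const)
    exact Complex.measurable_ofReal.comp (h1.comp hφ)
  have hSm : ∀ R : ℝ, Measurable (fun a => SI (R * φ a)) := fun R =>
    SI_continuous.measurable.comp (by fun_prop)
  have hsb : ∀ p : ℝ, |((SignType.sign p : SignType) : ℝ)| ≤ 1 := by
    intro p
    rcases lt_trichotomy p 0 with h | h | h
    · simp [sign_neg h]
    · simp [h]
    · simp [sign_pos h]
  have hn : ∀ a (z : ℝ), ‖(G a * (Complex.exp (Complex.I * (x * φ a)) * (-2 * Complex.I))) *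
        (z : ℂ)‖ = ‖G a‖ * 2 * |z| := by
    intro a z
    rw [norm_mul, norm_mul, norm_mul, norm_e]
    simp
  have hK : AEStronglyMeasurable
      (fun a => G a * (Complex.exp (Complex.I * (x * φ a)) * (-2 * Complex.I))) μ :=
    hG.aestronglyMeasurable.mul (by fun_prop)
  have step : ∀ ε : ℝ, 0 < ε → ∫ y in {y : ℝ | ε < |x - y|}, g y / ((x - y : ℝ) : ℂ) =
      ∫ a, (G a * (Complex.exp (Complex.I * (x * φ a)) * (-2 * Complex.I))) *
        ((π / 2 * (SignType.sign (φ a) : ℝ) - SI (ε * φ a) : ℝ) : ℂ) ∂μ := by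
    intro ε hε
    obtain ⟨h1, h2⟩ := trunc_fold g hgi x hε
    rw [h2]
    refine tendsto_nhds_unique (intervalIntegral_tendsto_integral_Ioi ε h1 tendsto_id) ?_
    have h3 : Tendsto (fun R : ℝ => ∫ a, (G a * (Complex.exp (Complex.I * (x * φ a)) *
        (-2 * Complex.I))) * ((SI (R * φ a) - SI (ε * φ a) : ℝ) : ℂ) ∂μ) atTop
        (nhds (∫ a, (G a * (Complex.exp (Complex.I * (x * φ a)) * (-2 * Complex.I))) *
        ((π / 2 * (SignType.sign (φ a) : ℝ) - SI (ε * φ a) : ℝ) : ℂ) ∂μ)) := by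
      refine tendsto_integral_filter_of_dominated_convergence (fun a => ‖G a‖ * 2 * 8) ?_ ?_ ?_ ?_
      · refine Eventually.of_forall fun R => hK.mul ?_
        exact (Complex.measurable_ofReal.comp ((hSm R).sub (hSm ε))).aestronglyMeasurable
      · refine Eventually.of_forall fun R => Eventually.of_forall fun a => ?_
        rw [hn]
        have b1 := abs_sub (SI (R * φ a)) (SI (ε * φ a))
        have b2 := SI_bdd (R * φ a)
        have b3 := SI_bdd (ε * φ a)
        gcongr
        linarith
      · exact (hG.norm.mul_const 2).mul_const 8
      · refine Eventually.of_forall fun a => Tendsto.const_mul _ ?_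
        exact (Complex.continuous_ofReal.tendsto _).comp
          ((SI_tendsto_mul (φ a)).sub tendsto_const_nhds)
    refine h3.congr' ?_
    filter_upwards [eventually_ge_atTop ε] with R hR
    exact (trunc_eq μ G hG φ hφ g hg x hε hR).symm
  have lim : Tendsto (fun ε : ℝ => ∫ a, (G a * (Complex.exp (Complex.I * (x * φ a)) *
        (-2 * Complex.I))) * ((π / 2 * (SignType.sign (φ a) : ℝ) - SI (ε * φ a) : ℝ) : ℂ) ∂μ)
      (nhdsWithin 0 (Ioi 0))
      (nhds (∫ a, (G a * (Complex.exp (Complex.I * (x * φ a)) * (-2 * Complex.I))) *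
        ((π / 2 * (SignType.sign (φ a) : ℝ) - 0 : ℝ) : ℂ) ∂μ)) := by
    refine tendsto_integral_filter_of_dominated_convergence (fun a => ‖G a‖ * 2 * 8) ?_ ?_ ?_ ?_
    · refine Eventually.of_forall fun R => hK.mul ?_
      push_cast
      refine Measurable.aestronglyMeasurable ?_
      exact (hsgn.const_mul _).sub (Complex.measurable_ofReal.comp (hSm R))
    · refine Eventually.of_forall fun R => Eventually.of_forall fun a => ?_
      rw [hn]
      have b1 := abs_sub (π / 2 * (SignType.sign (φ a) : ℝ)) (SI (R * φ a))
      have b2 := SI_bdd (R * φ a)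
      have b3 : |π / 2 * (SignType.sign (φ a) : ℝ)| ≤ 2 * 1 := by
        rw [abs_mul, abs_of_pos (by positivity : 0 < π / 2)]
        exact mul_le_mul (by linarith [pi_le_four]) (hsb _) (abs_nonneg _) (by norm_num)
      gcongr
      linarith
    · exact (hG.norm.mul_const 2).mul_const 8
    · refine Eventually.of_forall fun a => Tendsto.const_mul _ ?_
      refine (Complex.continuous_ofReal.tendsto _).comp (tendsto_const_nhds.sub ?_)
      have h5 : Tendsto (fun ε : ℝ => SI (ε * φ a)) (nhds 0) (nhds (SI (0 * φ a))) :=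
        (SI_continuous.comp (continuous_id.mul continuous_const)).tendsto 0
      rw [zero_mul, SI_zero] at h5
      exact h5.mono_left nhdsWithin_le_nhds
  have lim2 := lim.const_mul (1 / (π : ℂ))
  have e : (1 / (π : ℂ)) * ∫ a, (G a * (Complex.exp (Complex.I * (x * φ a)) * (-2 * Complex.I))) *
        ((π / 2 * (SignType.sign (φ a) : ℝ) - 0 : ℝ) : ℂ) ∂μ =
      ∫ a, G a * Complex.exp (Complex.I * (x * φ a)) *
        (-Complex.I * ((SignType.sign (φ a) : ℝ) : ℂ)) ∂μ := by
    rw [← integral_const_mul]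
    congr 1
    ext a
    have hpi : (π : ℂ) ≠ 0 := by exact_mod_cast pi_ne_zero
    push_cast
    field_simp
    ring
  rw [e] at lim2
  refine lim2.congr' ?_
  filter_upwards [self_mem_nhdsWithin] with ε hε
  rw [step ε hε]

end PV

lemma measurable_sgn : Measurable (fun p : ℝ => ((SignType.sign p : SignType) : ℝ)) := by
  have : (fun p : ℝ => ((SignType.sign p : SignType) : ℝ)) =
      fun p => if 0 < p then (1:ℝ) else if p < 0 then -1 else 0 := by
    ext p
    rcases lt_trichotomy p 0 with h | h | h
    · simp [sign_neg h, h, h.le.not_gt]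
    · simp [h]
    · simp [sign_pos h, h]
  rw [this]
  exact Measurable.ite measurableSet_Ioi measurable_const
    (Measurable.ite measurableSet_Iio measurable_const measurable_const)

lemma abs_sgn_le (p : ℝ) : |((SignType.sign p : SignType) : ℝ)| ≤ 1 := by
  rcases lt_trichotomy p 0 with h | h | h
  · simp [sign_neg h]
  · simp [h]
  · simp [sign_pos h]

lemma sgn_identity {p q : ℝ} (hp : p ≠ 0) (hq : q ≠ 0) :
    ((SignType.sign (p + q) : SignType) : ℝ) * ((SignType.sign p : ℝ) + (SignType.sign q : ℝ)) =
      1 + (SignType.sign p : ℝ) * (SignType.sign q : ℝ) := by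
  rcases lt_or_gt_of_ne hp with h | h <;> rcases lt_or_gt_of_ne hq with h' | h'
  · simp [sign_neg h, sign_neg h', sign_neg (add_neg h h')]
  · simp [sign_neg h, sign_pos h']
  · simp [sign_pos h, sign_neg h']
  · simp [sign_pos h, sign_pos h', sign_pos (add_pos h h')]

open scoped FourierTransform in
lemma schwartz_repr (ω : SchwartzMap ℝ ℝ) : ∃ F : ℝ → ℂ, Integrable F ∧
    ∀ y : ℝ, (ω y : ℂ) = ∫ ξ, F ξ * Complex.exp (Complex.I * (y * (2 * π * ξ : ℝ))) := by
  let ωc : SchwartzMap ℝ ℂ := SchwartzMap.postcompCLM Complex.ofRealCLM ω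
  refine ⟨(𝓕 ωc : SchwartzMap ℝ ℂ), (𝓕 ωc : SchwartzMap ℝ ℂ).integrable, fun y => ?_⟩
  have h : (𝓕⁻ (𝓕 ωc)) y = ωc y := by rw [FourierTransform.fourierInv_fourier_eq]
  rw [SchwartzMap.fourierInv_coe, Real.fourierInv_eq'] at h
  have h2 : ωc y = (ω y : ℂ) := rfl
  rw [← h2, ← h]
  congr 1
  ext ξ
  rw [smul_eq_mul, mul_comm]
  congr 2
  simp
  ring

lemma hilbertAt_of_complex {f : ℝ → ℝ} {x : ℝ} {L : ℂ}
    (h : Tendsto (fun ε : ℝ => (1 / (π : ℂ)) *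
        ∫ y in {y : ℝ | ε < |x - y|}, (f y : ℂ) / ((x - y : ℝ) : ℂ))
      (nhdsWithin 0 (Ioi 0)) (nhds L)) :
    HilbertAt f x L.re ∧ L = (L.re : ℂ) := by
  have e : ∀ ε : ℝ, (1 / (π : ℂ)) * ∫ y in {y : ℝ | ε < |x - y|}, (f y : ℂ) / ((x - y : ℝ) : ℂ) =
      (((1 / π) * ∫ y in {y : ℝ | ε < |x - y|}, f y / (x - y) : ℝ) : ℂ) := by
    intro ε
    rw [Complex.ofReal_mul, ← integral_complex_ofReal]
    push_cast
    rfl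
  simp_rw [e] at h
  constructor
  · exact (Complex.continuous_re.tendsto L).comp h
  · have h1 := (Complex.continuous_im.tendsto L).comp h
    have h2 : L.im = 0 := by
      refine tendsto_nhds_unique h1 ?_
      simp only [Function.comp_def, Complex.ofReal_im]
      exact tendsto_const_nhds
    exact (Complex.ext (by simp) (by simp [h2]))

theorem tricomi_identity (ω : SchwartzMap ℝ ℝ) :
    ∃ Hω : ℝ → ℝ,
      (∀ x : ℝ, HilbertAt (fun y => ω y) x (Hω x)) ∧
      (∀ x : ℝ, HilbertAt (fun y => ω y * Hω y) x
        ((1/2) * ((Hω x)^2 - (ω x)^2))) := by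
  obtain ⟨F, hF, hω⟩ := schwartz_repr ω
  let p : ℝ → ℝ := fun ξ => 2 * π * ξ
  have hp : Measurable p := by fun_prop
  let σ : ℝ → ℂ := fun ξ => ((SignType.sign (p ξ) : ℝ) : ℂ)
  have hσ : Measurable σ := Complex.measurable_ofReal.comp (measurable_sgn.comp hp)
  have hσb : ∀ ξ, ‖σ ξ‖ ≤ 1 := fun ξ => by
    simp only [σ, Complex.norm_real, norm_eq_abs]; exact abs_sgn_le _
  let e : ℝ → ℝ → ℂ := fun x ξ => Complex.exp (Complex.I * (x * p ξ))
  have he : ∀ x, Measurable (e x) := fun x => by fun_prop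
  have heb : ∀ x ξ, ‖e x ξ‖ ≤ 1 := fun x ξ => (norm_e x (p ξ)).le
  let Hc : ℝ → ℂ := fun x => ∫ ξ, F ξ * e x ξ * (-Complex.I * σ ξ)
  have hωi : Integrable (fun y => (ω y : ℂ)) := ω.integrable.ofReal
  have H1 := fun x => hilbertAt_of_complex (f := fun y => ω y)
    (pv_main volume F hF p hp (fun y => (ω y : ℂ)) hω hωi x)
  have H1' : ∀ x, HilbertAt (fun y => ω y) x (Hc x).re ∧ Hc x = ((Hc x).re : ℂ) := H1
  -- the second factor
  let F2 : ℝ → ℂ := fun ξ => F ξ * (-Complex.I * σ ξ)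
  have hF2 : Integrable F2 := by
    refine hF.mul_bdd (c := 1) (by fun_prop) (Eventually.of_forall fun ξ => ?_)
    simpa using hσb ξ
  have hHc : ∀ x, Hc x = ∫ ξ, F2 ξ * e x ξ := fun x => by
    simp only [Hc, F2]
    congr 1; ext ξ; ring
  have hexp : ∀ (x : ℝ) (z : ℝ × ℝ), Complex.exp (Complex.I * (x * ((p z.1 + p z.2 : ℝ) : ℂ))) =
      e x z.1 * e x z.2 := fun x z => by
    simp only [e]
    rw [← Complex.exp_add]
    congr 1
    push_cast
    ring
  have hprod : ∀ y : ℝ, ((ω y * (Hc y).re : ℝ) : ℂ) = ∫ z : ℝ × ℝ, (F z.1 * F2 z.2) *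
      Complex.exp (Complex.I * (y * ((p z.1 + p z.2 : ℝ) : ℂ))) ∂(volume.prod volume) := by
    intro y
    rw [Complex.ofReal_mul, ← (H1' y).2, hω, hHc, ← integral_prod_mul]
    congr 1
    ext z
    rw [hexp]
    simp only [e, p]
    ring
  have hcont : Continuous Hc := by
    have : Hc = fun x => ∫ ξ, F2 ξ * e x ξ := funext hHc
    rw [this]
    refine continuous_of_dominated (bound := fun ξ => ‖F2 ξ‖) ?_ ?_ hF2.norm ?_
    · intro x
      exact hF2.aestronglyMeasurable.mul (he x).aestronglyMeasurable
    · intro x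
      refine Eventually.of_forall fun ξ => ?_
      rw [norm_mul]
      exact mul_le_of_le_one_right (norm_nonneg _) (heb x ξ)
    · refine Eventually.of_forall fun ξ => ?_
      simp only [e]
      fun_prop
  have hHb : ∀ x, ‖Hc x‖ ≤ ∫ ξ, ‖F2 ξ‖ := by
    intro x
    rw [hHc]
    refine norm_integral_le_of_norm_le hF2.norm (Eventually.of_forall fun ξ => ?_)
    rw [norm_mul]
    exact mul_le_of_le_one_right (norm_nonneg _) (heb x ξ)
  have hgi : Integrable (fun y => ((ω y * (Hc y).re : ℝ) : ℂ)) := by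
    have h := hωi.mul_bdd (c := ∫ ξ, ‖F2 ξ‖) hcont.aestronglyMeasurable
      (Eventually.of_forall hHb)
    refine h.congr (Eventually.of_forall fun y => ?_)
    simp only []
    rw [Complex.ofReal_mul, ← (H1' y).2]
  have hG : Integrable (fun z : ℝ × ℝ => F z.1 * F2 z.2) (volume.prod volume) := hF.mul_prod hF2
  refine ⟨fun x => (Hc x).re, fun x => (H1' x).1, fun x => ?_⟩
  have H2 := hilbertAt_of_complex (f := fun y => ω y * (Hc y).re)
    (pv_main (volume.prod volume) (fun z : ℝ × ℝ => F z.1 * F2 z.2) hG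
      (fun z => p z.1 + p z.2) (by fun_prop) (fun y => ((ω y * (Hc y).re : ℝ) : ℂ)) hprod hgi x)
  -- evaluation of the limit
  let s : ℝ × ℝ → ℂ := fun z => ((SignType.sign (p z.1 + p z.2) : ℝ) : ℂ)
  have hs : Measurable s := Complex.measurable_ofReal.comp (measurable_sgn.comp (by fun_prop))
  let A : ℝ → ℂ := fun ξ => F ξ * e x ξ
  have hA : Integrable A :=
    hF.mul_bdd (c := 1) (he x).aestronglyMeasurable (Eventually.of_forall (heb x))
  let B : ℝ → ℂ := fun ξ => A ξ * σ ξ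
  have hB : Integrable B :=
    hA.mul_bdd (c := 1) hσ.aestronglyMeasurable (Eventually.of_forall hσb)
  have hsb : ∀ z, ‖s z‖ ≤ 1 := fun z => by
    simp only [s, Complex.norm_real, norm_eq_abs]; exact abs_sgn_le _
  have hAB : Integrable (fun z : ℝ × ℝ => A z.1 * B z.2 * s z) (volume.prod volume) :=
    (hA.mul_prod hB).mul_bdd (c := 1) hs.aestronglyMeasurable (Eventually.of_forall hsb)
  have hBA : Integrable (fun z : ℝ × ℝ => B z.1 * A z.2 * s z) (volume.prod volume) :=
    (hB.mul_prod hA).mul_bdd (c := 1) hs.aestronglyMeasurable (Eventually.of_forall hsb)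
  have hsw : ∫ z : ℝ × ℝ, A z.1 * B z.2 * s z ∂(volume.prod volume) =
      ∫ z : ℝ × ℝ, B z.1 * A z.2 * s z ∂(volume.prod volume) := by
    rw [← integral_prod_swap]
    congr 1
    ext z
    simp only [Prod.fst_swap, Prod.snd_swap, s, add_comm (p z.2)]
    ring
  have hne : ∀ᵐ z : ℝ × ℝ ∂(volume.prod volume), p z.1 ≠ 0 ∧ p z.2 ≠ 0 := by
    have h0 : ∀ᵐ ξ : ℝ, p ξ ≠ 0 := by
      filter_upwards [Measure.ae_ne volume (0:ℝ)] with ξ hξ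
      simp only [p]
      have := pi_pos
      positivity
    filter_upwards [Measure.quasiMeasurePreserving_fst.ae h0,
      Measure.quasiMeasurePreserving_snd.ae h0] with z h1 h2 using ⟨h1, h2⟩
  have hsum : 2 * ∫ z : ℝ × ℝ, A z.1 * B z.2 * s z ∂(volume.prod volume) =
      (∫ ξ, A ξ) * (∫ ξ, A ξ) + (∫ ξ, B ξ) * (∫ ξ, B ξ) := by
    rw [two_mul]
    nth_rewrite 2 [hsw]
    rw [← integral_add hAB hBA, ← integral_prod_mul, ← integral_prod_mul,
      ← integral_add (hA.mul_prod hA) (hB.mul_prod hB)]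
    refine integral_congr_ae ?_
    filter_upwards [hne] with z hz
    have h := sgn_identity hz.1 hz.2
    have h' : s z * (σ z.1 + σ z.2) = 1 + σ z.1 * σ z.2 := by
      simp only [s, σ]
      exact_mod_cast h
    simp only [B]
    linear_combination A z.1 * A z.2 * h'
  have hAω : ∫ ξ, A ξ = (ω x : ℂ) := (hω x).symm
  have hBH : -Complex.I * ∫ ξ, B ξ = ((Hc x).re : ℂ) := by
    rw [← (H1' x).2, ← integral_const_mul]
    simp only [Hc, B, A]
    congr 1; ext ξ; ring
  have hL : ∫ z : ℝ × ℝ, (F z.1 * F2 z.2) *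
      Complex.exp (Complex.I * (x * ((p z.1 + p z.2 : ℝ) : ℂ))) *
        (-Complex.I * ((SignType.sign (p z.1 + p z.2) : ℝ) : ℂ)) ∂(volume.prod volume) =
      (((1/2) * ((Hc x).re ^ 2 - (ω x) ^ 2) : ℝ) : ℂ) := by
    have h1 : ∫ z : ℝ × ℝ, (F z.1 * F2 z.2) *
      Complex.exp (Complex.I * (x * ((p z.1 + p z.2 : ℝ) : ℂ))) *
        (-Complex.I * ((SignType.sign (p z.1 + p z.2) : ℝ) : ℂ)) ∂(volume.prod volume) =
        - ∫ z : ℝ × ℝ, A z.1 * B z.2 * s z ∂(volume.prod volume) := by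
      rw [← integral_neg]
      congr 1
      ext z
      rw [hexp]
      simp only [F2, A, B, s]
      linear_combination (F z.1 * F z.2 * σ z.2 * e x z.1 * e x z.2 *
        ((SignType.sign (p z.1 + p z.2) : ℝ) : ℂ)) * Complex.I_sq
    rw [h1]
    push_cast
    rw [← hAω, ← hBH]
    linear_combination (-1/2 : ℂ) * hsum - (1/2 : ℂ) * (∫ ξ, B ξ) ^ 2 * Complex.I_sq
  rw [hL] at H2
  simpa only [Complex.ofReal_re] using H2.1
end

section
/- Let ω: ℝ → ℝ be a Schwartz function and set u_x = Hω (the Hilbert transform of ω). Then the function x ↦ (u_x(x) − u_x(0))·ω(x)/x extends continuously to x = 0, is Lebesgue integrable on ℝ, and ∫_ℝ (u_x(x) − u_x(0))·ω(x)/x dx = (π/2)·( u_x(0)² + ω(0)² ). -/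
open MeasureTheory Filter Real Set

noncomputable def eE (y : ℝ) : ℂ := Complex.exp (2 * π * y * Complex.I)

lemma eE_cont : Continuous eE := by unfold eE; fun_prop
lemma eE_norm (y : ℝ) : ‖eE y‖ = 1 := by
  unfold eE
  have := Complex.norm_exp_ofReal_mul_I (2 * π * y)
  push_cast at this; exact this
lemma eE_zero : eE 0 = 1 := by simp [eE]
lemma eE_add (x y : ℝ) : eE (x + y) = eE x * eE y := by
  unfold eE; rw [← Complex.exp_add]; push_cast; ring_nf
lemma eE_sub (y : ℝ) : eE (-y) - eE y = -2 * Complex.I * (Real.sin (2 * π * y) : ℂ) := by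
  unfold eE; push_cast
  rw [show (2 * π * -y * Complex.I : ℂ) = (-(2 * π * y)) * Complex.I by ring]
  rw [Complex.exp_mul_I, Complex.exp_mul_I, Complex.cos_neg, Complex.sin_neg]; ring

structure FPair (f : ℝ → ℝ) (a : ℝ → ℂ) : Prop where
  fc : Continuous f
  fi : Integrable f
  ac : Continuous a
  ai : Integrable a
  ai1 : Integrable (fun ξ => |ξ| * ‖a ξ‖)
  inv : ∀ x, (f x : ℂ) = ∫ ξ, a ξ * eE (x * ξ)
  four : ∀ ξ, a ξ = ∫ x, (f x : ℂ) * eE (- (x * ξ))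

open FourierTransform in
lemma exists_pair (ω : SchwartzMap ℝ ℝ) : ∃ a, FPair ω a := by
  let Ω : SchwartzMap ℝ ℂ := SchwartzMap.postcompCLM (𝕜 := ℝ) Complex.ofRealCLM ω
  have hΩ : ∀ x, Ω x = (ω x : ℂ) := fun x => rfl
  refine ⟨fun ξ => (𝓕 Ω) ξ, ω.continuous, ω.integrable, (𝓕 Ω).continuous, (𝓕 Ω).integrable, ?_, ?_, ?_⟩
  · exact ((𝓕 Ω).integrable_pow_mul volume 1).congr (Eventually.of_forall fun ξ => by simp)
  · intro x
    have h : (𝓕⁻ (𝓕 Ω)) x = Ω x := by simp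
    rw [SchwartzMap.fourierInv_coe, Real.fourierInv_eq'] at h
    rw [← hΩ, ← h]
    congr 1; ext ξ
    simp [eE]; rw [mul_comm]
  · intro ξ
    rw [SchwartzMap.fourier_coe, Real.fourier_eq']
    congr 1; ext x
    simp [eE, hΩ]; rw [mul_comm]; congr 2; ring

lemma pv_eq (f : ℝ → ℝ) (hf : Integrable f) (x ε : ℝ) (hε : 0 < ε) :
    ∫ y in {y : ℝ | ε < |x - y|}, f y / (x - y) =
      ∫ t in Ioi ε, (f (x - t) - f (x + t)) / t := by
  have hm : MeasurableSet {y : ℝ | ε < |x - y|} := by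
    apply measurableSet_lt <;> fun_prop
  have hS : {t : ℝ | ε < |t|} = Ioi ε ∪ Iio (-ε) := by
    ext t; simp [lt_abs]; constructor <;> rintro (h|h) <;> [left;right;left;right] <;> linarith
  have hd : ∀ g : ℝ → ℝ, Integrable g → Integrable (fun t => g t / t) (volume.restrict (Ioi ε)) := by
    intro g hg
    have : Integrable (fun t => g t * t⁻¹) (volume.restrict (Ioi ε)) := by
      refine (hg.restrict).mul_bdd (c := ε⁻¹) (by fun_prop) ?_
      filter_upwards [ae_restrict_mem measurableSet_Ioi] with t ht
      rw [norm_inv, Real.norm_of_nonneg (hε.le.trans ht.le)]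
      exact inv_anti₀ hε ht.le
    simpa [div_eq_mul_inv] using this
  have i1 := hd _ (hf.comp_sub_left x)
  have i2 := hd _ (hf.comp_add_left x)
  have i3 : IntegrableOn (fun t => f (x - t) / t) (Iio (-ε)) := by
    have : IntegrableOn (fun t => - (f (x + t) / t)) (Ioi ε) := i2.neg
    rw [← integrableOn_Ici_iff_integrableOn_Ioi] at this
    have h2 : IntegrableOn (fun t => f (x - t) / t) (Iic (-ε)) := by
      rw [← (Measure.measurePreserving_neg (volume : Measure ℝ)).integrableOn_comp_preimage
        (Homeomorph.neg ℝ).measurableEmbedding]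
      simpa [Function.comp_def, div_neg] using this
    exact h2.mono_set Iio_subset_Iic_self
  rw [← integral_indicator hm, ← integral_sub_left_eq_self _ volume x]
  have : ∀ t, ({y : ℝ | ε < |x - y|}.indicator (fun y => f y / (x - y))) (x - t) =
     ({t : ℝ | ε < |t|}.indicator (fun t => f (x - t) / t)) t := by
    intro t; simp [indicator]
  simp_rw [this]
  rw [integral_indicator (by rw [hS]; exact measurableSet_Ioi.union measurableSet_Iio), hS, setIntegral_union _ measurableSet_Iio i1 i3]
  · rw [← integral_Iic_eq_integral_Iio, ← integral_comp_neg_Ioi ε (fun t => f (x - t) / t), ← integral_add i1]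
    · congr 1; ext t; simp; ring
    · simpa [div_neg] using i2.neg
  · rw [Set.disjoint_left]; intro t; simp; intros; linarith

lemma FPair.N_eq {f : ℝ → ℝ} {a : ℝ → ℂ} (h : FPair f a) (x t : ℝ) :
    ((f (x - t) - f (x + t) : ℝ) : ℂ) =
      ∫ ξ, a ξ * eE (x * ξ) * (-2 * Complex.I * (Real.sin (2 * π * (t * ξ)) : ℂ)) := by
  have hi : ∀ y, Integrable (fun ξ => a ξ * eE (y * ξ)) := by
    intro y
    refine h.ai.mul_bdd (c := 1) ?_ ?_
    · exact (eE_cont.comp (by fun_prop)).aestronglyMeasurable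
    · exact Eventually.of_forall fun ξ => (eE_norm _).le
  push_cast
  rw [h.inv, h.inv, ← integral_sub (hi _) (hi _)]
  congr 1; ext ξ
  have := eE_sub (t * ξ)
  push_cast at this
  rw [← this, show (x - t) * ξ = x * ξ + -(t * ξ) by ring, add_mul, eE_add, eE_add]; ring

lemma FPair.N_bound {f : ℝ → ℝ} {a : ℝ → ℂ} (h : FPair f a) (x : ℝ) {t : ℝ} (ht : 0 < t) :
    |f (x - t) - f (x + t)| ≤ (4 * π * ∫ ξ, |ξ| * ‖a ξ‖) * t := by
  rw [← Real.norm_eq_abs, ← Complex.norm_real, h.N_eq x t]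
  have e : (4 * π * ∫ ξ, |ξ| * ‖a ξ‖) * t = ∫ ξ, (4 * π * t) * (|ξ| * ‖a ξ‖) := by
    rw [integral_const_mul]; ring
  rw [e]
  refine norm_integral_le_of_norm_le (h.ai1.const_mul _) (Eventually.of_forall fun ξ => ?_)
  simp only [norm_mul, eE_norm, Complex.norm_real, norm_neg, Complex.norm_I]
  have : |Real.sin (2 * π * (t * ξ))| ≤ 2 * π * (t * |ξ|) := by
    refine Real.abs_sin_le_abs.trans ?_
    rw [abs_mul, abs_mul, abs_mul, abs_of_pos ht, abs_of_pos Real.pi_pos]; simp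
  simp only [Real.norm_eq_abs, Complex.norm_ofNat]
  have := mul_le_mul_of_nonneg_left this (norm_nonneg (a ξ))
  linarith

lemma FPair.D_int {f : ℝ → ℝ} {a : ℝ → ℂ} (h : FPair f a) (x : ℝ) :
    IntegrableOn (fun t => (f (x - t) - f (x + t)) / t) (Ioi 0) := by
  have hfc := h.fc
  set C := 4 * π * ∫ ξ, |ξ| * ‖a ξ‖
  have hg : Integrable (fun t => (Ioc (0:ℝ) 1).indicator (fun _ => C) t + (|f (x - t)| + |f (x + t)|)) := by
    refine Integrable.add ?_ ((h.fi.comp_sub_left x).abs.add (h.fi.comp_add_left x).abs)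
    rw [integrable_indicator_iff measurableSet_Ioc]
    exact integrableOn_const (by simp)
  refine hg.integrableOn.mono' ?_ ?_
  · have : Measurable (fun t => (f (x - t) - f (x + t)) / t) := by fun_prop
    exact this.aestronglyMeasurable
  · filter_upwards [ae_restrict_mem measurableSet_Ioi] with t ht
    have ht : 0 < t := ht
    rw [norm_div, Real.norm_eq_abs, Real.norm_eq_abs, abs_of_pos ht, div_le_iff₀ ht]
    have h1 := h.N_bound x ht
    have h2 := abs_sub (f (x - t)) (f (x + t))
    by_cases h3 : t ≤ 1
    · rw [indicator_of_mem (show t ∈ Ioc (0:ℝ) 1 from ⟨ht, h3⟩)]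
      have : 0 ≤ (|f (x - t)| + |f (x + t)|) * t := by positivity
      linarith
    · rw [indicator_of_notMem (fun h4 => h3 h4.2)]
      push Not at h3
      have : 0 ≤ (|f (x - t)| + |f (x + t)|) := by positivity
      nlinarith

lemma FPair.hil {f : ℝ → ℝ} {a : ℝ → ℂ} (h : FPair f a) (x L : ℝ) (hL : HilbertAt f x L) :
    L = (1 / π) * ∫ t in Ioi 0, (f (x - t) - f (x + t)) / t := by
  refine tendsto_nhds_unique hL ?_
  refine Tendsto.const_mul _ ?_
  set D := fun t => (f (x - t) - f (x + t)) / t with hD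
  have hDi := h.D_int x
  have : Tendsto (fun ε : ℝ => ∫ t in Ioi 0, (Ioi ε).indicator D t) (nhdsWithin 0 (Ioi 0))
      (nhds (∫ t in Ioi 0, D t)) := by
    refine tendsto_integral_filter_of_dominated_convergence (fun t => ‖D t‖) ?_ ?_ hDi.norm ?_
    · exact Eventually.of_forall fun ε => hDi.aestronglyMeasurable.indicator measurableSet_Ioi
    · exact Eventually.of_forall fun ε => Eventually.of_forall fun t => norm_indicator_le_norm_self _ _
    · filter_upwards [ae_restrict_mem measurableSet_Ioi] with t ht
      refine tendsto_const_nhds.congr' ?_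
      have : Iio t ∈ nhdsWithin (0:ℝ) (Ioi 0) := mem_nhdsWithin_of_mem_nhds (Iio_mem_nhds ht)
      filter_upwards [this] with ε hε
      rw [indicator_of_mem]; exact hε
  refine this.congr' ?_
  filter_upwards [self_mem_nhdsWithin] with ε hε
  have hε : 0 < ε := hε
  rw [pv_eq f h.fi x ε hε, setIntegral_indicator measurableSet_Ioi,
    Set.inter_eq_right.2 (Ioi_subset_Ioi hε.le)]

lemma lap_sin (s b : ℝ) (hs : 0 < s) :
    ∫ t in Ioi 0, Real.exp (-(s * t)) * Real.sin (b * t) = b / (s ^ 2 + b ^ 2) := by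
  have ha : (⟨-s, b⟩ : ℂ).re < 0 := by simpa using hs
  have h := integral_exp_mul_complex_Ioi ha 0
  have hi := integrableOn_exp_mul_complex_Ioi ha 0
  have h2 := congrArg Complex.im h
  have h3 : ∫ t in Ioi (0:ℝ), (Complex.exp (⟨-s, b⟩ * t)).im =
      (∫ t in Ioi (0:ℝ), Complex.exp (⟨-s, b⟩ * t)).im := integral_im hi
  rw [← h3] at h2
  simp [Complex.exp_im, Complex.div_im, Complex.normSq] at h2
  rw [h2]; rw [neg_div, neg_neg, sq, sq]

lemma cauchy_pos (b : ℝ) (hb : 0 < b) :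
    IntegrableOn (fun s => b / (s ^ 2 + b ^ 2)) (Ioi 0) ∧
    ∫ s in Ioi 0, b / (s ^ 2 + b ^ 2) = π / 2 := by
  have hd : ∀ s ∈ Ici (0:ℝ), HasDerivAt (fun s => Real.arctan (s / b)) (b / (s ^ 2 + b ^ 2)) s := by
    intro s _
    convert! ((hasDerivAt_id s).div_const b).arctan using 1
    simp; field_simp; ring
  have ht : Tendsto (fun s => Real.arctan (s / b)) atTop (nhds (π / 2)) :=
    (tendsto_nhds_of_tendsto_nhdsWithin Real.tendsto_arctan_atTop).comp (tendsto_id.atTop_div_const hb)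
  have hp : ∀ s ∈ Ioi (0:ℝ), 0 ≤ b / (s ^ 2 + b ^ 2) := fun s _ => by positivity
  refine ⟨integrableOn_Ioi_deriv_of_nonneg' hd hp ht, ?_⟩
  rw [integral_Ioi_of_hasDerivAt_of_nonneg' hd hp ht]; simp

lemma cauchy_all (b : ℝ) :
    IntegrableOn (fun s => b / (s ^ 2 + b ^ 2)) (Ioi 0) ∧
    ∫ s in Ioi 0, b / (s ^ 2 + b ^ 2) = π / 2 * SignType.sign b := by
  rcases lt_trichotomy b 0 with hb | hb | hb
  · obtain ⟨h1, h2⟩ := cauchy_pos (-b) (by linarith)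
    have e : (fun s : ℝ => b / (s ^ 2 + b ^ 2)) = fun s => - (-b / (s ^ 2 + (-b) ^ 2)) := by
      ext s; rw [neg_sq]; ring
    rw [e]
    refine ⟨h1.neg, ?_⟩
    rw [integral_neg, h2]; simp [sign_neg hb]
  · subst hb; simp
  · simpa [sign_pos hb] using cauchy_pos b hb

lemma fubini_one (N : ℝ → ℝ) (hN : Continuous N) (hi : IntegrableOn (fun t => N t / t) (Ioi 0)) :
    ∫ t in Ioi 0, N t / t = ∫ s in Ioi 0, ∫ t in Ioi 0, Real.exp (-(s * t)) * N t := by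
  have e : ∀ t ∈ Ioi (0:ℝ), IntegrableOn (fun s => Real.exp (-(s * t))) (Ioi 0) ∧
      ∫ s in Ioi 0, Real.exp (-(s * t)) = 1 / t := by
    intro t ht
    have ht' : -t < 0 := by simpa using ht
    have e1 : ∀ s : ℝ, Real.exp (-(s * t)) = Real.exp (-t * s) := fun s => by ring_nf
    simp_rw [e1]
    refine ⟨integrableOn_exp_mul_Ioi ht' 0, ?_⟩
    rw [integral_exp_mul_Ioi ht' 0]; simp
  rw [← integral_integral_swap]
  · refine setIntegral_congr_fun measurableSet_Ioi fun t ht => ?_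
    rw [integral_mul_const, (e t ht).2]; ring
  · rw [integrable_prod_iff (by
      apply Continuous.aestronglyMeasurable; unfold Function.uncurry; fun_prop)]
    constructor
    · filter_upwards [ae_restrict_mem measurableSet_Ioi] with t ht
      exact (e t ht).1.mul_const (N t)
    · refine hi.norm.congr ?_
      filter_upwards [ae_restrict_mem measurableSet_Ioi] with t ht
      simp only [Function.uncurry, norm_mul, Real.norm_eq_abs, Real.abs_exp]
      rw [integral_mul_const, (e t ht).2, abs_div, abs_of_pos (show 0 < t from ht)]; ring

lemma FPair.inner {f : ℝ → ℝ} {a : ℝ → ℂ} (h : FPair f a) (x s : ℝ) (hs : 0 < s) :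
    ((∫ t in Ioi 0, Real.exp (-(s * t)) * (f (x - t) - f (x + t)) : ℝ) : ℂ) =
      ∫ ξ, a ξ * eE (x * ξ) * (-2 * Complex.I *
        ((2 * π * ξ / (s ^ 2 + (2 * π * ξ) ^ 2) : ℝ) : ℂ)) := by
  have hac := h.ac
  have hE := eE_cont
  rw [← integral_complex_ofReal]
  have e1 : ∀ t : ℝ, ((Real.exp (-(s * t)) * (f (x - t) - f (x + t)) : ℝ) : ℂ) =
      ∫ ξ, (Real.exp (-(s * t)) : ℂ) * (a ξ * eE (x * ξ) *
        (-2 * Complex.I * (Real.sin (2 * π * (t * ξ)) : ℂ))) := by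
    intro t
    rw [integral_const_mul, ← h.N_eq]; push_cast; ring
  simp_rw [e1]
  rw [integral_integral_swap]
  · congr 1; ext ξ
    have e2 : ∀ t : ℝ, (Real.exp (-(s * t)) : ℂ) * (a ξ * eE (x * ξ) *
        (-2 * Complex.I * (Real.sin (2 * π * (t * ξ)) : ℂ))) =
        (a ξ * eE (x * ξ) * (-2 * Complex.I)) *
          ((Real.exp (-(s * t)) * Real.sin (2 * π * ξ * t) : ℝ) : ℂ) := by
      intro t
      rw [show 2 * π * (t * ξ) = 2 * π * ξ * t by ring]; push_cast; ring
    simp_rw [e2]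
    rw [integral_const_mul, integral_complex_ofReal, lap_sin _ _ hs]; ring
  · have hx : IntegrableOn (fun t => Real.exp (-s * t)) (Ioi 0) :=
      integrableOn_exp_mul_Ioi (by linarith) 0
    have hb := (hx.mul_prod h.ai.norm).const_mul 2
    refine hb.mono' ?_ (Eventually.of_forall ?_)
    · apply Continuous.aestronglyMeasurable; unfold Function.uncurry; fun_prop
    · rintro ⟨t, ξ⟩
      simp only [Function.uncurry, norm_mul, eE_norm, Complex.norm_real, norm_neg, Complex.norm_I,
        Real.norm_eq_abs, Real.abs_exp, Complex.norm_ofNat]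
      have := Real.abs_sin_le_one (2 * π * (t * ξ))
      have h3 : 0 ≤ Real.exp (-s * t) * ‖a ξ‖ := by positivity
      rw [show -(s * t) = -s * t by ring]
      nlinarith

lemma FPair.hil_fourier {f : ℝ → ℝ} {a : ℝ → ℂ} (h : FPair f a) (x L : ℝ) (hL : HilbertAt f x L) :
    (L : ℂ) = ∫ ξ, a ξ * eE (x * ξ) * (-Complex.I * ((SignType.sign ξ : ℝ) : ℂ)) := by
  have hfc := h.fc
  have hac := h.ac
  have hE := eE_cont
  rw [h.hil x L hL, fubini_one _ (by fun_prop) (h.D_int x)]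
  push_cast
  rw [← integral_complex_ofReal]
  have e1 : ∫ s in Ioi (0:ℝ), ((∫ t in Ioi 0, Real.exp (-(s * t)) * (f (x - t) - f (x + t)) : ℝ) : ℂ)
      = ∫ s in Ioi (0:ℝ), ∫ ξ, a ξ * eE (x * ξ) * (-2 * Complex.I *
        ((2 * π * ξ / (s ^ 2 + (2 * π * ξ) ^ 2) : ℝ) : ℂ)) :=
    setIntegral_congr_fun measurableSet_Ioi fun s hs => h.inner x s hs
  rw [e1, integral_integral_swap]
  · rw [← integral_const_mul]
    congr 1; ext ξ
    rw [integral_const_mul, integral_const_mul, integral_complex_ofReal, (cauchy_all _).2]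
    have : SignType.sign (2 * π * ξ) = SignType.sign ξ := by
      rw [sign_mul, sign_pos (by positivity)]; simp
    rw [this]
    have hpi : (π : ℂ) ≠ 0 := by exact_mod_cast Real.pi_ne_zero
    push_cast; field_simp
  · have hm : AEStronglyMeasurable (Function.uncurry fun (s ξ : ℝ) => a ξ * eE (x * ξ) * (-2 * Complex.I *
        ((2 * π * ξ / (s ^ 2 + (2 * π * ξ) ^ 2) : ℝ) : ℂ))) ((volume.restrict (Ioi 0)).prod volume) := by
      have h1 : Measurable (fun p : ℝ × ℝ => a p.2 * eE (x * p.2)) := by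
        apply Continuous.measurable; fun_prop
      have h2 : Measurable (fun p : ℝ × ℝ => ((2 * π * p.2 / (p.1 ^ 2 + (2 * π * p.2) ^ 2) : ℝ) : ℂ)) := by
        apply Complex.measurable_ofReal.comp; fun_prop
      exact (h1.mul (h2.const_mul _)).aestronglyMeasurable
    rw [integrable_prod_iff' hm]
    constructor
    · refine Eventually.of_forall fun ξ => ?_
      have h5 : Integrable (fun s : ℝ => ((2 * π * ξ / (s ^ 2 + (2 * π * ξ) ^ 2) : ℝ) : ℂ))
          (volume.restrict (Ioi 0)) := (cauchy_all (2 * π * ξ)).1.ofReal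
      exact (h5.const_mul (-2 * Complex.I)).const_mul (a ξ * eE (x * ξ))
    · refine (h.ai.norm.const_mul π).mono' hm.norm.prod_swap.integral_prod_right' (Eventually.of_forall fun ξ => ?_)
      have e3 : ∀ s : ℝ, ‖Function.uncurry (fun (s ξ : ℝ) => a ξ * eE (x * ξ) * (-2 * Complex.I *
        ((2 * π * ξ / (s ^ 2 + (2 * π * ξ) ^ 2) : ℝ) : ℂ))) (s, ξ)‖ =
          (‖a ξ‖ * 2) * (|2 * π * ξ| / (s ^ 2 + |2 * π * ξ| ^ 2)) := by
        intro s
        simp only [Function.uncurry, norm_mul, eE_norm, Complex.norm_real, norm_neg, Complex.norm_I,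
          Complex.norm_ofNat, norm_div, sq_abs]
        rw [Real.norm_of_nonneg (show 0 ≤ s ^ 2 + (2 * π * ξ) ^ 2 by positivity)]
        simp only [Real.norm_eq_abs, abs_mul]; ring
      simp_rw [e3]
      rw [integral_const_mul, (cauchy_all _).2]
      have h4 : ‖((SignType.sign |2 * π * ξ| : SignType) : ℝ)‖ ≤ 1 := by
        rcases (SignType.sign |2 * π * ξ|) <;> simp
      rw [norm_mul, norm_mul, norm_mul, norm_norm, Real.norm_of_nonneg (show 0 ≤ π / 2 by positivity)]
      have : 0 ≤ π * ‖a ξ‖ := by positivity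
      simp only [Real.norm_ofNat]
      nlinarith

lemma meas_sign : Measurable (fun ξ : ℝ => ((SignType.sign ξ : SignType) : ℝ)) := by
  have : (fun ξ : ℝ => ((SignType.sign ξ : SignType) : ℝ)) =
      fun ξ => if 0 < ξ then 1 else if ξ < 0 then -1 else 0 := by
    ext ξ
    rw [sign_apply]; split_ifs <;> simp
  rw [this]
  exact Measurable.ite measurableSet_Ioi measurable_const
    (Measurable.ite measurableSet_Iio measurable_const measurable_const)

lemma integral_split (F : ℝ → ℂ) (hF : Integrable F) :
    ∫ ξ, F ξ = (∫ ξ in Ioi 0, F ξ) + ∫ ξ in Ioi 0, F (-ξ) := by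
  rw [← intervalIntegral.integral_Iic_add_Ioi (b := 0) hF.integrableOn hF.integrableOn,
    integral_comp_neg_Ioi, neg_zero, add_comm]

noncomputable def mU : Measure (ℝ × ℝ) := (volume : Measure ℝ).prod (volume.restrict (Ioc (0:ℝ) 1))

instance : SFinite mU := by unfold mU; infer_instance

lemma FPair.G_int {f : ℝ → ℝ} {a : ℝ → ℂ} (h : FPair f a) :
    Integrable (fun p : ℝ × ℝ => a p.1 * ((|p.1| : ℝ) : ℂ)) mU := by
  have h1 : Integrable (fun ξ : ℝ => a ξ * ((|ξ| : ℝ) : ℂ)) := by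
    refine h.ai1.mono' ?_ (Eventually.of_forall fun ξ => ?_)
    · have := h.ac
      apply Continuous.aestronglyMeasurable; fun_prop
    · simp [mul_comm]
  have h2 : Integrable (fun _ : ℝ => (1:ℂ)) (volume.restrict (Ioc (0:ℝ) 1)) := by
    exact integrable_const _
  simpa [mU] using h1.mul_prod h2

noncomputable def kK (a : ℝ → ℂ) (x : ℝ) : ℂ :=
  2 * π * ∫ p : ℝ × ℝ, (a p.1 * ((|p.1| : ℝ) : ℂ)) * eE (x * (p.1 * p.2)) ∂mU

lemma FPair.K_cont {f : ℝ → ℝ} {a : ℝ → ℂ} (h : FPair f a) : Continuous (kK a) := by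
  have hac := h.ac
  have hE := eE_cont
  unfold kK
  refine continuous_const.mul ?_
  refine continuous_of_dominated (bound := fun p => ‖a p.1 * ((|p.1| : ℝ) : ℂ)‖) ?_ ?_ h.G_int.norm ?_
  · intro x
    apply Continuous.aestronglyMeasurable; fun_prop
  · intro x; refine Eventually.of_forall fun p => ?_
    rw [norm_mul, eE_norm, mul_one]
  · refine Eventually.of_forall fun p => ?_
    fun_prop

lemma FPair.K_bound {f : ℝ → ℝ} {a : ℝ → ℂ} (h : FPair f a) (x : ℝ) :
    ‖kK a x‖ ≤ 2 * π * ∫ p : ℝ × ℝ, ‖a p.1 * ((|p.1| : ℝ) : ℂ)‖ ∂mU := by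
  unfold kK
  rw [norm_mul]
  have : ‖(2 * π : ℂ)‖ = 2 * π := by simp [Real.pi_pos.le]
  rw [this]
  gcongr
  refine norm_integral_le_of_norm_le h.G_int.norm (Eventually.of_forall fun p => ?_)
  rw [norm_mul, eE_norm, mul_one]

lemma eE_int (x ξ : ℝ) (hx : x ≠ 0) :
    2 * π * (((|ξ| : ℝ) : ℂ) * ∫ s in (0:ℝ)..1, eE (x * (ξ * s))) =
      (-Complex.I * ((SignType.sign ξ : ℝ) : ℂ)) * (eE (x * ξ) - 1) / x := by
  by_cases hξ : ξ = 0
  · subst hξ; simp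
  have hpi : (π : ℂ) ≠ 0 := by exact_mod_cast Real.pi_ne_zero
  have hx' : (x : ℂ) ≠ 0 := by exact_mod_cast hx
  have hξ' : (ξ : ℂ) ≠ 0 := by exact_mod_cast hξ
  have hc : (2 * π * x * ξ * Complex.I : ℂ) ≠ 0 := by
    simp [hpi, hx', hξ']
  have e : ∀ s : ℝ, eE (x * (ξ * s)) = Complex.exp ((2 * π * x * ξ * Complex.I) * s) := by
    intro s; unfold eE; push_cast; ring_nf
  have e1 : eE (x * ξ) = Complex.exp ((2 * π * x * ξ * Complex.I) * (1:ℝ)) := by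
    rw [← e]; simp
  simp_rw [e]
  rw [integral_exp_mul_complex hc, e1]
  have hs : ((|ξ| : ℝ) : ℂ) = ((SignType.sign ξ : ℝ) : ℂ) * ξ := by
    rw [← Complex.ofReal_mul, sign_mul_self]
  rw [hs]
  simp only [Complex.ofReal_zero, mul_zero, Complex.exp_zero]
  field_simp
  rw [Complex.I_sq]; ring

lemma FPair.K_eq {f : ℝ → ℝ} {a : ℝ → ℂ} (h : FPair f a) (ux : ℝ → ℝ)
    (hH : ∀ x, HilbertAt f x (ux x)) (x : ℝ) (hx : x ≠ 0) :
    kK a x = ((ux x - ux 0) / x : ℝ) := by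
  have hac := h.ac
  have hE := eE_cont
  have hi : ∀ y, Integrable (fun ξ => a ξ * eE (y * ξ) * (-Complex.I * ((SignType.sign ξ : ℝ) : ℂ))) := by
    intro y
    refine h.ai.norm.mono' ?_ (Eventually.of_forall fun ξ => ?_)
    · refine AEStronglyMeasurable.mul (by apply Continuous.aestronglyMeasurable; fun_prop) ?_
      refine AEStronglyMeasurable.const_mul ?_ _
      have : Measurable (fun ξ : ℝ => ((SignType.sign ξ : SignType) : ℝ)) :=
        meas_sign
      exact (Complex.measurable_ofReal.comp this).aestronglyMeasurable
    · rw [norm_mul, norm_mul, eE_norm, mul_one]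
      have h4 : ‖(-Complex.I * ((SignType.sign ξ : ℝ) : ℂ))‖ ≤ 1 := by
        rcases (SignType.sign ξ) <;> simp
      exact mul_le_of_le_one_right (norm_nonneg _) h4
  push_cast
  rw [h.hil_fourier x _ (hH x), h.hil_fourier 0 _ (hH 0), ← integral_sub (hi _) (hi _), ← integral_div]
  unfold kK mU
  rw [integral_prod, ← integral_const_mul]
  · congr 1; ext ξ
    simp only
    rw [integral_const_mul, ← intervalIntegral.integral_of_le zero_le_one]
    have := eE_int x ξ hx
    rw [zero_mul, eE_zero, mul_assoc (a ξ), mul_left_comm, this]; ring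
  · refine h.G_int.mul_bdd (c := 1) ?_ (Eventually.of_forall fun p => (eE_norm _).le)
    apply Continuous.aestronglyMeasurable; fun_prop

lemma FPair.T_eq {f : ℝ → ℝ} {a : ℝ → ℂ} (h : FPair f a) :
    ∫ p : ℝ × ℝ, (a p.1 * ((|p.1| : ℝ) : ℂ)) * a (-(p.1 * p.2)) ∂mU =
      (∫ ξ in Ioi 0, a ξ) * ∫ ξ in Ioi 0, a (-ξ) := by
  have hac := h.ac
  have hE := eE_cont
  have hab : ∀ ξ, ‖a ξ‖ ≤ ∫ x, ‖f x‖ := by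
    intro ξ
    rw [h.four]
    refine norm_integral_le_of_norm_le h.fi.norm (Eventually.of_forall fun x => ?_)
    rw [norm_mul, eE_norm, mul_one, Complex.norm_real]
  have hGi : Integrable (fun p : ℝ × ℝ => (a p.1 * ((|p.1| : ℝ) : ℂ)) * a (-(p.1 * p.2))) mU := by
    refine h.G_int.mul_bdd (c := ∫ x, ‖f x‖) ?_ (Eventually.of_forall fun p => hab _)
    apply Continuous.aestronglyMeasurable; fun_prop
  unfold mU at hGi ⊢
  have hF := hGi.integral_prod_left
  rw [integral_prod _ hGi, integral_split _ hF]
  set P : ℝ → ℂ := fun ξ => ∫ η in (0:ℝ)..ξ, a η with hP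
  set Q : ℝ → ℂ := fun ξ => ∫ η in (0:ℝ)..ξ, a (-η) with hQ
  have e1 : ∀ ξ : ℝ, 0 < ξ → ∫ s in Ioc (0:ℝ) 1, (a ξ * ((|ξ| : ℝ) : ℂ)) * a (-(ξ * s)) = a ξ * Q ξ := by
    intro ξ hξ
    rw [integral_const_mul, ← intervalIntegral.integral_of_le zero_le_one, abs_of_pos hξ, mul_assoc]
    have := intervalIntegral.smul_integral_comp_mul_left (a := 0) (b := 1) (fun η => a (-η)) ξ
    rw [Complex.real_smul] at this
    rw [this]; simp [hQ]
  have e2 : ∀ ξ : ℝ, 0 < ξ → ∫ s in Ioc (0:ℝ) 1, (a (-ξ) * ((|-ξ| : ℝ) : ℂ)) * a (-(-ξ * s)) = a (-ξ) * P ξ := by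
    intro ξ hξ
    rw [integral_const_mul, ← intervalIntegral.integral_of_le zero_le_one, abs_neg, abs_of_pos hξ, mul_assoc]
    have := intervalIntegral.smul_integral_comp_mul_left (a := 0) (b := 1) (fun η => a η) ξ
    rw [Complex.real_smul] at this
    simp only [neg_mul, neg_neg]
    rw [this]; simp [hP]
  have i1 : IntegrableOn (fun ξ => a ξ * Q ξ) (Ioi 0) := by
    refine hF.integrableOn.congr_fun (fun ξ hξ => ?_) measurableSet_Ioi
    exact e1 ξ hξ
  have i2 : IntegrableOn (fun ξ => a (-ξ) * P ξ) (Ioi 0) := by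
    refine hF.comp_neg.integrableOn.congr_fun (fun ξ hξ => ?_) measurableSet_Ioi
    have := e2 ξ hξ
    simpa using this
  rw [setIntegral_congr_fun (g := fun ξ => a ξ * Q ξ) measurableSet_Ioi (fun ξ hξ => e1 ξ hξ)]
  rw [setIntegral_congr_fun (s := Ioi 0)
    (f := fun ξ => ∫ s in Ioc (0:ℝ) 1, (a (-ξ) * ((|-ξ| : ℝ) : ℂ)) * a (-(-ξ * s)))
    (g := fun ξ => a (-ξ) * P ξ) measurableSet_Ioi (fun ξ hξ => e2 ξ hξ)]
  rw [← integral_add i1 i2]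
  have hPd : ∀ ξ, HasDerivAt P (a ξ) ξ := fun ξ => hac.integral_hasStrictDerivAt 0 ξ |>.hasDerivAt
  have hQd : ∀ ξ, HasDerivAt Q (a (-ξ)) ξ := fun ξ =>
    (show Continuous (fun η => a (-η)) by fun_prop).integral_hasStrictDerivAt 0 ξ |>.hasDerivAt
  have hd : ∀ ξ ∈ Ici (0:ℝ), HasDerivAt (fun ξ => P ξ * Q ξ) (a ξ * Q ξ + a (-ξ) * P ξ) ξ := by
    intro ξ _
    convert! (hPd ξ).mul (hQd ξ) using 1
    ring
  have hlim : Tendsto (fun ξ => P ξ * Q ξ) atTop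
      (nhds ((∫ ξ in Ioi 0, a ξ) * ∫ ξ in Ioi 0, a (-ξ))) := by
    refine Tendsto.mul ?_ ?_
    · exact intervalIntegral_tendsto_integral_Ioi 0 h.ai.integrableOn tendsto_id
    · exact intervalIntegral_tendsto_integral_Ioi 0 h.ai.comp_neg.integrableOn tendsto_id
  rw [integral_Ioi_of_hasDerivAt_of_tendsto' hd (i1.add i2) hlim]
  simp [hP]

lemma FPair.fK {f : ℝ → ℝ} {a : ℝ → ℂ} (h : FPair f a) :
    ∫ x, (f x : ℂ) * kK a x = 2 * π * ((∫ ξ in Ioi 0, a ξ) * ∫ ξ in Ioi 0, a (-ξ)) := by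
  have hac := h.ac
  have hfc := h.fc
  have hE := eE_cont
  rw [← h.T_eq]
  unfold kK
  simp_rw [mul_left_comm _ (2 * π : ℂ)]
  rw [integral_const_mul]
  congr 1
  simp_rw [← integral_const_mul]
  rw [integral_integral_swap]
  · congr 1; ext p
    simp_rw [mul_left_comm _ (a p.1 * ((|p.1| : ℝ) : ℂ))]
    rw [integral_const_mul, h.four (-(p.1 * p.2))]
    simp only [mul_neg, neg_neg]
  · have := h.fi.ofReal (𝕜 := ℂ) |>.mul_prod h.G_int
    refine this.norm.mono' ?_ (Eventually.of_forall fun q => ?_)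
    · apply Continuous.aestronglyMeasurable; unfold Function.uncurry; fun_prop
    · simp [Function.uncurry, eE_norm]

/-- For a Schwartz function `ω` with `u_x = Hω`, the function
`x ↦ (u_x(x) − u_x(0))·ω(x)/x` extends continuously to `0`, is integrable,
and its integral equals `(π/2)(u_x(0)² + ω(0)²)`. -/
theorem integral_velocity_cancellation (ω : SchwartzMap ℝ ℝ) (ux : ℝ → ℝ)
    (hH : ∀ x : ℝ, HilbertAt (fun y => ω y) x (ux x)) :
    ∃ g : ℝ → ℝ, Continuous g ∧
      (∀ x : ℝ, x ≠ 0 → g x = (ux x - ux 0) * ω x / x) ∧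
      Integrable g ∧
      ∫ x : ℝ, g x = (Real.pi / 2) * ((ux 0)^2 + (ω 0)^2) := by
  obtain ⟨a, h⟩ := exists_pair ω
  have hKc := h.K_cont
  have hfc := h.fc
  have hKi : Integrable (fun x => (ω x : ℂ) * kK a x) :=
    (h.fi.ofReal (𝕜 := ℂ)).mul_bdd hKc.aestronglyMeasurable (Eventually.of_forall h.K_bound)
  have hre : ∀ x, ((ω x : ℂ) * kK a x).re = ω x * (kK a x).re := fun x => by simp
  refine ⟨fun x => ((ω x : ℂ) * kK a x).re, ?_, ?_, hKi.re, ?_⟩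
  · exact Complex.continuous_re.comp ((Complex.continuous_ofReal.comp hfc).mul hKc)
  · intro x hx
    simp only
    rw [hre, h.K_eq ux hH x hx, Complex.ofReal_re]; ring
  · have e1 : ∫ x, ((ω x : ℂ) * kK a x).re = (∫ x, (ω x : ℂ) * kK a x).re := integral_re hKi
    rw [e1, h.fK]
    have hu := h.hil_fourier 0 _ (hH 0)
    have hw := h.inv 0
    simp only [zero_mul, eE_zero, mul_one] at hu hw
    rw [integral_split _ h.ai] at hw
    have hsi : Integrable (fun ξ => a ξ * (-Complex.I * ((SignType.sign ξ : ℝ) : ℂ))) := by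
      refine h.ai.mul_bdd (c := 1) ?_ (Eventually.of_forall fun ξ => ?_)
      · refine AEStronglyMeasurable.const_mul ?_ _
        have : Measurable (fun ξ : ℝ => ((SignType.sign ξ : SignType) : ℝ)) :=
          meas_sign
        exact (Complex.measurable_ofReal.comp this).aestronglyMeasurable
      · rcases (SignType.sign ξ) <;> simp
    rw [integral_split _ hsi] at hu
    rw [setIntegral_congr_fun (s := Ioi 0)
      (f := fun ξ => a ξ * (-Complex.I * ((SignType.sign ξ : ℝ) : ℂ)))
      (g := fun ξ => a ξ * (-Complex.I)) measurableSet_Ioi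
      (fun ξ hξ => by simp [sign_pos (show 0 < ξ from hξ)])] at hu
    rw [setIntegral_congr_fun (s := Ioi 0)
      (f := fun ξ => a (-ξ) * (-Complex.I * ((SignType.sign (-ξ) : ℝ) : ℂ)))
      (g := fun ξ => a (-ξ) * Complex.I) measurableSet_Ioi
      (fun ξ hξ => by simp [sign_neg (show -ξ < 0 from neg_lt_zero.2 hξ)])] at hu
    rw [integral_mul_const, integral_mul_const] at hu
    have : (2 * π * ((∫ ξ in Ioi 0, a ξ) * ∫ ξ in Ioi 0, a (-ξ)) : ℂ) =
        ((Real.pi / 2 * ((ux 0)^2 + (ω 0)^2) : ℝ) : ℂ) := by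
      push_cast
      rw [hu, hw]
      ring_nf
      rw [Complex.I_sq]; ring
    rw [this, Complex.ofReal_re]
end

section
/- Let ω: ℝ → ℝ be an odd Schwartz function and set u_x = Hω (the Hilbert transform of ω), which is an even smooth function. Then the function x ↦ (u_x(x) − u_x(0))·ω(x)/x³ extends continuously to x = 0, is Lebesgue integrable on ℝ, and ∫_ℝ (u_x(x) − u_x(0))·ω(x)/x³ dx = (π/2)·ω'(0)². In particular this integral is nonnegative, and it vanishes if ω'(0) = 0. -/
open MeasureTheory Filter Real Set

open scoped Topology FourierTransform

lemma aux_ae_ne_zero : ∀ᵐ x : ℝ, x ≠ 0 := by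
  simp [ae_iff, measure_singleton]

lemma aux_continuous_dslope (f : ℝ → ℝ) (hf : Continuous f) (hd : DifferentiableAt ℝ f 0) :
    Continuous (dslope f 0) := by
  rw [← continuousOn_univ]
  exact (continuousOn_dslope (by simp)).2 ⟨hf.continuousOn, hd⟩

lemma aux_dslope (f : ℝ → ℝ) (h0 : f 0 = 0) (x : ℝ) (hx : x ≠ 0) : dslope f 0 x = f x / x := by
  rw [dslope_of_ne _ hx, slope_def_field, h0]; simp

lemma aux_mul_dslope (f : ℝ → ℝ) (h0 : f 0 = 0) (x : ℝ) : x * dslope f 0 x = f x := by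
  by_cases hx : x = 0
  · simp [hx, h0]
  · rw [aux_dslope f h0 x hx]; field_simp

/-- The divided difference at zero of an integrable function is integrable. -/
lemma aux_integrable_dslope (f : ℝ → ℝ) (hf : Continuous f) (hd : DifferentiableAt ℝ f 0)
    (h0 : f 0 = 0) (hi : Integrable f) : Integrable (dslope f 0) := by
  have hc := aux_continuous_dslope f hf hd
  have h1 : IntegrableOn (dslope f 0) (Icc (-1) 1) := hc.continuousOn.integrableOn_Icc
  have h2 : IntegrableOn (dslope f 0) (Icc (-1) 1)ᶜ := by
    refine Integrable.mono' (hi.norm.integrableOn) hc.aestronglyMeasurable ?_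
    refine (ae_restrict_iff' measurableSet_Icc.compl).2 (Eventually.of_forall fun x hx => ?_)
    have hx1 : 1 ≤ |x| := by
      by_contra h
      push Not at h
      exact hx (abs_le.1 h.le)
    have : ‖f x‖ = |x| * ‖dslope f 0 x‖ := by
      rw [← aux_mul_dslope f h0 x, norm_mul]; simp
    rw [this]
    nlinarith [norm_nonneg (dslope f 0 x)]
  have := h1.union h2
  rwa [union_compl_self, integrableOn_univ] at this

lemma aux_cos_fourier (f : ℝ → ℝ) (hi : Integrable f) (s : ℝ) :
    ∫ t, Real.cos (t * s) * f t = (𝓕 (fun t => (f t : ℂ)) (s / (2 * π))).re := by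
  rw [Real.fourier_real_eq_integral_exp_smul]
  rw [← RCLike.re_eq_complex_re, ← integral_re]
  · congr 1; ext t
    have h : ((-2 * π * t * (s / (2 * π)) : ℝ) : ℂ) = ((-(t * s) : ℝ) : ℂ) := by
      congr 1; field_simp
    rw [h]
    simp [Complex.exp_re]
  · have hc : Integrable (fun t => (f t : ℂ)) := hi.ofReal
    refine Integrable.mono hc ?_ ?_
    · have hcont : Continuous fun v : ℝ =>
          Complex.exp (((-2 * π * v * (s / (2 * π)) : ℝ) : ℂ) * Complex.I) := by fun_prop
      exact hcont.aestronglyMeasurable.smul hc.1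
    · refine Eventually.of_forall fun t => ?_
      rw [norm_smul, Complex.norm_exp_ofReal_mul_I]; simp

lemma aux_riemann_lebesgue (f : ℝ → ℝ) (hi : Integrable f) :
    Tendsto (fun s => ∫ t, Real.cos (t * s) * f t) atTop (𝓝 0) := by
  simp_rw [aux_cos_fourier f hi]
  have h1 := Real.zero_at_infty_fourier (fun t => (f t : ℂ))
  have h2 : Tendsto (fun s : ℝ => s / (2 * π)) atTop (cocompact ℝ) :=
    (tendsto_id.atTop_div_const (by positivity)).mono_right atTop_le_cocompact
  have h3 := (Complex.continuous_re.tendsto 0).comp (h1.comp h2)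
  simpa [Function.comp_def] using h3

lemma aux_hasDerivAt_cos (q f : ℝ → ℝ) (hq : Integrable q) (hf : Integrable f)
    (hqf : ∀ x, x * q x = f x) (s : ℝ) :
    HasDerivAt (fun s => ∫ t, Real.cos (t * s) * q t) (-∫ t, Real.sin (t * s) * f t) s := by
  rw [← integral_neg]
  refine (hasDerivAt_integral_of_dominated_loc_of_deriv_le (s := univ) (bound := fun t => ‖f t‖)
    (F := fun s t => Real.cos (t * s) * q t) (F' := fun s t => -(Real.sin (t * s) * f t))
    univ_mem ?_ ?_ ?_ ?_ hf.norm ?_).2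
  · exact Eventually.of_forall fun s =>
      (Continuous.aestronglyMeasurable (by fun_prop)).mul hq.1
  · refine Integrable.mono hq ((Continuous.aestronglyMeasurable (by fun_prop)).mul hq.1) ?_
    refine Eventually.of_forall fun t => ?_
    rw [norm_mul]
    exact mul_le_of_le_one_left (norm_nonneg _) (Real.abs_cos_le_one _)
  · exact ((Continuous.aestronglyMeasurable (by fun_prop)).mul hf.1).neg
  · refine Eventually.of_forall fun t x _ => ?_
    rw [norm_neg, norm_mul]
    exact mul_le_of_le_one_left (norm_nonneg _) (Real.abs_sin_le_one _)
  · refine Eventually.of_forall fun t x _ => ?_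
    have := ((((hasDerivAt_id x).const_mul t).cos).mul_const (q t))
    refine this.congr_deriv ?_
    rw [← hqf]; simp only [id]; ring

/-- `∫_a^∞ S = C(a)`. -/
lemma aux_integral_sin (q f : ℝ → ℝ) (hq : Integrable q) (hf : Integrable f)
    (hqf : ∀ x, x * q x = f x) (a : ℝ)
    (hS : IntegrableOn (fun s => ∫ t, Real.sin (t * s) * f t) (Ioi a)) :
    ∫ s in Ioi a, ∫ t, Real.sin (t * s) * f t = ∫ t, Real.cos (t * a) * q t := by
  have := integral_Ioi_of_hasDerivAt_of_tendsto' (a := a)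
    (fun s _ => aux_hasDerivAt_cos q f hq hf hqf s) hS.neg (aux_riemann_lebesgue q hq)
  rw [integral_neg] at this
  linarith

/-- Sine transform. -/
noncomputable def sineT (f : ℝ → ℝ) (s : ℝ) : ℝ := ∫ t, Real.sin (t * s) * f t

/-- Complexification of a real Schwartz function. -/
noncomputable def cplx (ω : SchwartzMap ℝ ℝ) : SchwartzMap ℝ ℂ :=
  ω.postcompCLM (𝕜 := ℝ) Complex.ofRealCLM

lemma cplx_apply (ω : SchwartzMap ℝ ℝ) (x : ℝ) : cplx ω x = (ω x : ℂ) := rfl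

lemma aux_integrable_sin (f : ℝ → ℝ) (hi : Integrable f) (s : ℝ) :
    Integrable (fun t => Real.sin (t * s) * f t) := by
  refine Integrable.mono hi ((Continuous.aestronglyMeasurable (by fun_prop)).mul hi.1) ?_
  refine Eventually.of_forall fun t => ?_
  rw [norm_mul]
  exact mul_le_of_le_one_left (norm_nonneg _) (Real.abs_sin_le_one _)

lemma aux_integrable_cos (f : ℝ → ℝ) (hi : Integrable f) (s : ℝ) :
    Integrable (fun t => Real.cos (t * s) * f t) := by
  refine Integrable.mono hi ((Continuous.aestronglyMeasurable (by fun_prop)).mul hi.1) ?_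
  refine Eventually.of_forall fun t => ?_
  rw [norm_mul]
  exact mul_le_of_le_one_left (norm_nonneg _) (Real.abs_cos_le_one _)

lemma aux_cos_odd (f : ℝ → ℝ) (hodd : ∀ x, f (-x) = -f x) (s : ℝ) :
    ∫ t, Real.cos (t * s) * f t = 0 := by
  have h := integral_neg_eq_self (fun t => Real.cos (t * s) * f t) volume
  simp only [hodd, neg_mul, Real.cos_neg, mul_neg, integral_neg] at h
  linarith

lemma sineT_fourier (ω : SchwartzMap ℝ ℝ) (hodd : ∀ x : ℝ, ω (-x) = -ω x) (ξ : ℝ) :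
    𝓕 (cplx ω) ξ = -Complex.I * (sineT ω (2 * π * ξ) : ℂ) := by
  rw [SchwartzMap.fourier_coe, Real.fourier_real_eq_integral_exp_smul]
  have h1 : ∀ v : ℝ, Complex.exp (((-2 * π * v * ξ : ℝ) : ℂ) * Complex.I) • (cplx ω) v =
      ((Real.cos (v * (2 * π * ξ)) * ω v : ℝ) : ℂ)
        - Complex.I * ((Real.sin (v * (2 * π * ξ)) * ω v : ℝ) : ℂ) := by
    intro v
    have : (-2 * π * v * ξ : ℝ) = -(v * (2 * π * ξ)) := by ring
    rw [this, Complex.exp_mul_I, ← Complex.ofReal_cos, ← Complex.ofReal_sin, Real.cos_neg,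
      Real.sin_neg, cplx_apply]
    push_cast
    simp only [smul_eq_mul]
    ring
  simp_rw [h1]
  have hi : Integrable (fun x => ω x) := ω.integrable
  rw [integral_sub, integral_const_mul, integral_complex_ofReal, integral_complex_ofReal,
    aux_cos_odd _ hodd]
  · simp [sineT]
  · exact (aux_integrable_cos _ hi _).ofReal
  · exact ((aux_integrable_sin _ hi _).ofReal (𝕜 := ℂ)).const_mul _

lemma sineT_eq (ω : SchwartzMap ℝ ℝ) (hodd : ∀ x : ℝ, ω (-x) = -ω x) (s : ℝ) :
    (sineT ω s : ℂ) = Complex.I * 𝓕 (cplx ω) (s / (2 * π)) := by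
  rw [sineT_fourier ω hodd, show 2 * π * (s / (2 * π)) = s by field_simp, ← mul_assoc]
  simp

lemma sineT_abs (ω : SchwartzMap ℝ ℝ) (hodd : ∀ x : ℝ, ω (-x) = -ω x) (s : ℝ) :
    |sineT ω s| = ‖𝓕 (cplx ω) (s / (2 * π))‖ := by
  rw [← Real.norm_eq_abs, ← Complex.norm_real, sineT_eq ω hodd]
  simp

lemma sineT_continuous (ω : SchwartzMap ℝ ℝ) (hodd : ∀ x : ℝ, ω (-x) = -ω x) :
    Continuous (sineT ω) := by
  have : sineT ω = fun s => (Complex.I * 𝓕 (cplx ω) (s / (2 * π))).re := by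
    ext s; rw [← sineT_eq ω hodd]; simp
  rw [this]
  have := (𝓕 (cplx ω)).continuous
  fun_prop

lemma sineT_integrable (ω : SchwartzMap ℝ ℝ) (hodd : ∀ x : ℝ, ω (-x) = -ω x) (k : ℕ) :
    Integrable (fun s => s ^ k * sineT ω s) := by
  have h := ((𝓕 (cplx ω)).integrable_pow_mul volume k).comp_div
    (show (2 * π) ≠ 0 by positivity)
  refine Integrable.mono' (h.const_mul ((2 * π) ^ k))
    ((continuous_pow k).mul (sineT_continuous ω hodd)).aestronglyMeasurable ?_
  refine Eventually.of_forall fun s => le_of_eq ?_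
  rw [norm_mul, Real.norm_eq_abs (sineT _ _), sineT_abs ω hodd, norm_pow, norm_div, div_pow,
    Real.norm_of_nonneg (show 0 ≤ 2 * π by positivity)]
  field_simp

lemma sineT_deriv (ω : SchwartzMap ℝ ℝ) (hodd : ∀ x : ℝ, ω (-x) = -ω x) :
    ∫ s in Ioi (0 : ℝ), s * sineT ω s = π * deriv (fun y => ω y) 0 := by
  have hF : 𝓕 (deriv (cplx ω)) = fun (x : ℝ) ↦ (2 * π * Complex.I * x) • (𝓕 (cplx ω : ℝ → ℂ) x) :=
    Real.fourier_deriv (cplx ω).integrable (cplx ω).differentiable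
      (SchwartzMap.derivCLM ℝ ℂ (cplx ω)).integrable
  have hd : deriv (cplx ω) 0 = ((deriv (fun y => ω y) 0 : ℝ) : ℂ) := by
    have := (ω.hasDerivAt 0).ofReal_comp
    exact this.deriv
  have hinv : (𝓕⁻ (𝓕 (SchwartzMap.derivCLM ℝ ℂ (cplx ω)))) 0 = deriv (cplx ω) 0 := by
    rw [FourierTransform.fourierInv_fourier_eq]; rfl
  rw [SchwartzMap.fourierInv_coe, Real.fourierInv_eq, SchwartzMap.fourier_coe] at hinv
  have hc : ((SchwartzMap.derivCLM ℝ ℂ (cplx ω) : SchwartzMap ℝ ℂ) : ℝ → ℂ) = deriv (cplx ω) := rfl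
  rw [hc, hF, hd] at hinv
  have h2 : ∀ v : ℝ, (2 * π * Complex.I * v) • (𝓕 (cplx ω : ℝ → ℂ) v) =
      (((2 * π * v) * sineT ω (2 * π * v) : ℝ) : ℂ) := by
    intro v
    rw [← SchwartzMap.fourier_coe, sineT_fourier ω hodd, smul_eq_mul]
    push_cast
    linear_combination (-2 * π * v * (sineT ω (2 * π * v)) : ℂ) * Complex.I_mul_I
  simp only [inner_zero_right, AddChar.map_zero_eq_one, one_smul] at hinv
  simp_rw [h2] at hinv
  rw [integral_complex_ofReal] at hinv
  have h3 : ∫ v, (2 * π * v) * sineT ω (2 * π * v) = deriv (fun y => ω y) 0 := by exact_mod_cast hinv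
  rw [Measure.integral_comp_mul_left (fun s => s * sineT ω s) (2 * π)] at h3
  have h4 : ∫ s, s * sineT ω s = 2 * ∫ s in Ioi (0 : ℝ), s * sineT ω s := by
    rw [← integral_comp_abs (f := fun s => s * sineT ω s)]
    congr 1; ext s
    rcases abs_choice s with h | h <;> rw [h]
    simp [sineT]
    simp [integral_neg]
  rw [h4, abs_of_pos (by positivity), smul_eq_mul] at h3
  rw [← h3]; field_simp

lemma aux_sin_shift_sub (ω : SchwartzMap ℝ ℝ) (hodd : ∀ x : ℝ, ω (-x) = -ω x) (x s : ℝ) :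
    ∫ t, Real.sin (t * s) * ω (x - t) = -(Real.cos (x * s) * sineT ω s) := by
  have hi : Integrable (fun x => ω x) := ω.integrable
  have h := integral_sub_left_eq_self (fun u => Real.sin ((x - u) * s) * ω u) volume x
  simp only [sub_sub_cancel] at h
  rw [h]
  have h2 : ∀ u, Real.sin ((x - u) * s) * ω u =
      Real.sin (x * s) * (Real.cos (u * s) * ω u) - Real.cos (x * s) * (Real.sin (u * s) * ω u) := by
    intro u; rw [sub_mul, Real.sin_sub]; ring
  simp_rw [h2]
  rw [integral_sub ((aux_integrable_cos _ hi s).const_mul _)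
    ((aux_integrable_sin _ hi s).const_mul _), integral_const_mul, integral_const_mul,
    aux_cos_odd _ hodd]
  simp [sineT]

lemma aux_sin_shift_add (ω : SchwartzMap ℝ ℝ) (hodd : ∀ x : ℝ, ω (-x) = -ω x) (x s : ℝ) :
    ∫ t, Real.sin (t * s) * ω (x + t) = Real.cos (x * s) * sineT ω s := by
  have h := integral_neg_eq_self (fun t => Real.sin (t * s) * ω (x + t)) volume
  rw [← h]
  have h2 := aux_sin_shift_sub ω hodd x s
  simp only [neg_mul, Real.sin_neg, integral_neg, ← sub_eq_add_neg]
  rw [h2, neg_neg]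

lemma aux_sineT_psi (ω : SchwartzMap ℝ ℝ) (hodd : ∀ x : ℝ, ω (-x) = -ω x) (x s : ℝ) :
    ∫ t, Real.sin (t * s) * (ω (x - t) - ω (x + t)) = -2 * (Real.cos (x * s) * sineT ω s) := by
  have hi : Integrable (fun x => ω x) := ω.integrable
  simp_rw [mul_sub]
  rw [integral_sub (aux_integrable_sin _ (hi.comp_sub_left x) s)
    (aux_integrable_sin _ (hi.comp_add_left x) s), aux_sin_shift_sub ω hodd,
    aux_sin_shift_add ω hodd]
  ring

lemma aux_integrable_cosB (ω : SchwartzMap ℝ ℝ) (hodd : ∀ x : ℝ, ω (-x) = -ω x) (x : ℝ) :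
    Integrable (fun s => Real.cos (x * s) * sineT ω s) := by
  have h := sineT_integrable ω hodd 0
  simp only [pow_zero, one_mul] at h
  simpa [mul_comm] using aux_integrable_cos _ h x

lemma aux_int_psi (ω : SchwartzMap ℝ ℝ) (hodd : ∀ x : ℝ, ω (-x) = -ω x) (x : ℝ) :
    Integrable (dslope (fun t => ω (x - t) - ω (x + t)) 0) ∧
    ∫ t, dslope (fun t => ω (x - t) - ω (x + t)) 0 t =
      -2 * ∫ s in Ioi (0 : ℝ), Real.cos (x * s) * sineT ω s := by
  have hi : Integrable (fun x => ω x) := ω.integrable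
  have hc := ω.continuous
  have hd := ω.differentiable
  have hi2 : Integrable (fun t => ω (x - t) - ω (x + t)) :=
    (hi.comp_sub_left x).sub (hi.comp_add_left x)
  have h0 : (fun t => ω (x - t) - ω (x + t)) 0 = 0 := by simp
  have hq := aux_integrable_dslope (fun t => ω (x - t) - ω (x + t)) (by fun_prop)
    (by
      have h1 : Differentiable ℝ (fun t => ω (x - t)) := hd.comp (by fun_prop)
      have h2 : Differentiable ℝ (fun t => ω (x + t)) := hd.comp (by fun_prop)
      exact (h1.sub h2) 0) h0 hi2
  refine ⟨hq, ?_⟩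
  have h := aux_integral_sin _ _ hq hi2 (aux_mul_dslope _ h0) 0
  simp_rw [aux_sineT_psi ω hodd, integral_const_mul] at h
  rw [h ((aux_integrable_cosB ω hodd x).const_mul _).integrableOn]
  simp

lemma aux_trunc (ω : SchwartzMap ℝ ℝ) (x ε : ℝ) (hε : 0 < ε) :
    ∫ y in {y : ℝ | ε < |x - y|}, ω y / (x - y) =
      (1 / 2) * ∫ t, {t : ℝ | ε < |t|}.indicator (dslope (fun t => ω (x - t) - ω (x + t)) 0) t := by
  have hi : Integrable (fun x => ω x) := ω.integrable
  have hm : MeasurableSet {t : ℝ | ε < |t|} := measurableSet_lt (by fun_prop) (by fun_prop)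
  have hm2 : MeasurableSet {y : ℝ | ε < |x - y|} := measurableSet_lt (by fun_prop) (by fun_prop)
  have key : ∀ f : ℝ → ℝ, Integrable f →
      Integrable ({t : ℝ | ε < |t|}.indicator (fun t => f t / t)) := by
    intro f hf
    rw [integrable_indicator_iff hm]
    refine Integrable.mono' (g := fun t => ε⁻¹ * ‖f t‖) (hf.norm.const_mul _).integrableOn
      (hf.1.div₀ measurable_id.aestronglyMeasurable).restrict ?_
    refine (ae_restrict_iff' hm).2 (Eventually.of_forall fun t ht => ?_)
    rw [norm_div, Real.norm_eq_abs t, div_eq_inv_mul]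
    have : ε < |t| := ht
    gcongr
  have e1 : ∫ y in {y : ℝ | ε < |x - y|}, ω y / (x - y) =
      ∫ t, {t : ℝ | ε < |t|}.indicator (fun t => ω (x - t) / t) t := by
    rw [← integral_indicator hm2, ← integral_sub_left_eq_self _ volume x]
    congr 1; ext t
    simp [indicator]
  have e2 : ∫ t, {t : ℝ | ε < |t|}.indicator (fun t => ω (x - t) / t) t =
      - ∫ t, {t : ℝ | ε < |t|}.indicator (fun t => ω (x + t) / t) t := by
    rw [← integral_neg_eq_self _ volume, ← integral_neg]
    congr 1; ext t
    simp only [indicator, mem_ofPred_eq, abs_neg, sub_neg_eq_add]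
    split_ifs <;> simp [div_neg]
  have e3 : ∫ t, {t : ℝ | ε < |t|}.indicator (dslope (fun t => ω (x - t) - ω (x + t)) 0) t =
      (∫ t, {t : ℝ | ε < |t|}.indicator (fun t => ω (x - t) / t) t)
      - ∫ t, {t : ℝ | ε < |t|}.indicator (fun t => ω (x + t) / t) t := by
    rw [← integral_sub (key _ (hi.comp_sub_left x)) (key _ (hi.comp_add_left x))]
    congr 1; ext t
    simp only [indicator, mem_ofPred_eq]
    split_ifs with h
    · have ht : t ≠ 0 := by
        rintro rfl
        simp at h; linarith
      rw [aux_dslope _ (by simp) t ht, sub_div]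
    · simp
  rw [e1, e3]
  linarith

lemma aux_ux (ω : SchwartzMap ℝ ℝ) (hodd : ∀ x : ℝ, ω (-x) = -ω x) (x L : ℝ)
    (hL : HilbertAt (fun y => ω y) x L) :
    L = -(1 / π) * ∫ s in Ioi (0 : ℝ), Real.cos (x * s) * sineT ω s := by
  obtain ⟨hq, hval⟩ := aux_int_psi ω hodd x
  have hlim : Tendsto (fun ε : ℝ => ∫ t, {t : ℝ | ε < |t|}.indicator
      (dslope (fun t => ω (x - t) - ω (x + t)) 0) t) (𝓝[>] 0)
      (𝓝 (∫ t, dslope (fun t => ω (x - t) - ω (x + t)) 0 t)) := by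
    refine tendsto_integral_filter_of_dominated_convergence
      (fun t => ‖dslope (fun t => ω (x - t) - ω (x + t)) 0 t‖) ?_ ?_ hq.norm ?_
    · exact Eventually.of_forall fun ε =>
        hq.1.indicator (measurableSet_lt (by fun_prop) (by fun_prop))
    · exact Eventually.of_forall fun ε => Eventually.of_forall fun t =>
        norm_indicator_le_norm_self _ _
    · filter_upwards [aux_ae_ne_zero] with t ht
      refine tendsto_const_nhds.congr' ?_
      have : ∀ᶠ ε in 𝓝[>] (0 : ℝ), ε < |t| :=
        nhdsWithin_le_nhds (eventually_lt_nhds (abs_pos.2 ht))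
      filter_upwards [this] with ε hε
      rw [indicator_of_mem]
      exact hε
  have h2 : Tendsto (fun ε : ℝ => (1 / π) * ∫ y in {y : ℝ | ε < |x - y|}, ω y / (x - y)) (𝓝[>] 0)
      (𝓝 ((1 / π) * ((1 / 2) * ∫ t, dslope (fun t => ω (x - t) - ω (x + t)) 0 t))) := by
    refine ((hlim.const_mul (1 / 2)).const_mul (1 / π)).congr' ?_
    filter_upwards [self_mem_nhdsWithin] with ε hε
    rw [aux_trunc ω x ε hε]
  rw [tendsto_nhds_unique hL h2, hval]
  ring

/-- The kernel `(1 - cos (x s)) / x ^ 2`, continuously extended. -/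
noncomputable def kerK (x s : ℝ) : ℝ := s ^ 2 / 2 * Real.sinc (x * s / 2) ^ 2

lemma kerK_eq (x s : ℝ) (hx : x ≠ 0) : kerK x s = (1 - Real.cos (x * s)) / x ^ 2 := by
  unfold kerK
  by_cases hs : s = 0
  · simp [hs]
  · rw [Real.sinc_of_ne_zero (by positivity)]
    have h : Real.cos (x * s) = 1 - 2 * Real.sin (x * s / 2) ^ 2 := by
      have := Real.cos_two_mul (x * s / 2)
      have h2 := Real.sin_sq_add_cos_sq (x * s / 2)
      rw [show 2 * (x * s / 2) = x * s by ring] at this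
      linarith
    rw [h]
    field_simp
    ring

lemma kerK_bound (x s : ℝ) : |kerK x s| ≤ s ^ 2 := by
  unfold kerK
  have h := Real.abs_sinc_le_one (x * s / 2)
  have h2 : Real.sinc (x * s / 2) ^ 2 ≤ 1 := by rw [← sq_abs]; nlinarith [abs_nonneg (Real.sinc (x * s / 2))]
  rw [abs_of_nonneg (by positivity)]
  nlinarith [sq_nonneg s, sq_nonneg (Real.sinc (x * s / 2))]

lemma kerK_continuous : Continuous (fun p : ℝ × ℝ => kerK p.1 p.2) := by
  unfold kerK
  have := Real.continuous_sinc
  fun_prop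

lemma kerE_eq (x s : ℝ) (hx : x ≠ 0) : s * Real.sinc (x * s) = Real.sin (x * s) / x := by
  by_cases hs : s = 0
  · simp [hs]
  · rw [Real.sinc_of_ne_zero (by positivity)]
    field_simp

lemma aux_contE (s : ℝ) : Continuous (fun x => s * Real.sinc (x * s)) := by
  have := Real.continuous_sinc
  fun_prop

lemma aux_contK (s : ℝ) : Continuous (fun x => kerK x s) :=
  kerK_continuous.comp (by fun_prop : Continuous fun x : ℝ => (x, s))

lemma aux_intK (q : ℝ → ℝ) (hq : Integrable q) (s : ℝ) : Integrable (fun x => kerK x s * q x) := by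
  refine Integrable.mono' (hq.norm.const_mul (s ^ 2)) ((aux_contK s).aestronglyMeasurable.mul hq.1) ?_
  refine Eventually.of_forall fun x => ?_
  rw [norm_mul]
  exact mul_le_mul_of_nonneg_right (kerK_bound x s) (norm_nonneg _)

lemma aux_intE (q : ℝ → ℝ) (hq : Integrable q) (s : ℝ) :
    Integrable (fun x => s * Real.sinc (x * s) * q x) := by
  refine Integrable.mono' (hq.norm.const_mul |s|) ((aux_contE s).aestronglyMeasurable.mul hq.1) ?_
  refine Eventually.of_forall fun x => ?_
  rw [norm_mul, norm_mul]
  exact mul_le_mul_of_nonneg_right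
    (mul_le_of_le_one_right (norm_nonneg _) (Real.abs_sinc_le_one _)) (norm_nonneg _)

lemma aux_hasDerivAt_E (q : ℝ → ℝ) (hq : Integrable q) (s : ℝ) :
    HasDerivAt (fun s => ∫ x, s * Real.sinc (x * s) * q x) (∫ x, Real.cos (x * s) * q x) s := by
  refine (hasDerivAt_integral_of_dominated_loc_of_deriv_le (s := univ) (bound := fun t => ‖q t‖)
    (F := fun s x => s * Real.sinc (x * s) * q x) (F' := fun s x => Real.cos (x * s) * q x)
    univ_mem ?_ (aux_intE q hq s) (aux_integrable_cos q hq s).1 ?_ hq.norm ?_).2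
  · exact Eventually.of_forall fun s => (aux_intE q hq s).1
  · refine Eventually.of_forall fun t x _ => ?_
    rw [norm_mul]
    exact mul_le_of_le_one_left (norm_nonneg _) (Real.abs_cos_le_one _)
  · filter_upwards [aux_ae_ne_zero] with x hx r _
    have h := ((((hasDerivAt_id r).const_mul x).sin).div_const x).mul_const (q x)
    simp_rw [kerE_eq x _ hx]
    refine h.congr_deriv ?_
    simp only [id]; field_simp

lemma aux_hasDerivAt_D (q : ℝ → ℝ) (hq : Integrable q) (s : ℝ) :
    HasDerivAt (fun s => ∫ x, kerK x s * q x) (∫ x, s * Real.sinc (x * s) * q x) s := by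
  refine (hasDerivAt_integral_of_dominated_loc_of_deriv_le (s := Metric.ball s 1)
    (bound := fun t => (|s| + 1) * ‖q t‖)
    (F := fun s x => kerK x s * q x) (F' := fun s x => s * Real.sinc (x * s) * q x)
    (Metric.ball_mem_nhds s one_pos) ?_ (aux_intK q hq s) (aux_intE q hq s).1 ?_
    (hq.norm.const_mul _) ?_).2
  · exact Eventually.of_forall fun s => (aux_intK q hq s).1
  · refine Eventually.of_forall fun x r hr => ?_
    have hr' : |r| ≤ |s| + 1 := by
      have h1 : |r - s| < 1 := hr
      have h2 := abs_sub_abs_le_abs_sub r s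
      linarith
    rw [norm_mul, norm_mul]
    exact mul_le_mul_of_nonneg_right
      ((mul_le_of_le_one_right (norm_nonneg _) (Real.abs_sinc_le_one _)).trans hr') (norm_nonneg _)
  · filter_upwards [aux_ae_ne_zero] with x hx r _
    have h := (((((hasDerivAt_id r).const_mul x).cos).const_sub 1).div_const (x ^ 2)).mul_const (q x)
    simp_rw [kerE_eq x _ hx, kerK_eq x _ hx]
    refine h.congr_deriv ?_
    simp only [id]; field_simp

lemma aux_D_bound (q : ℝ → ℝ) (hq : Integrable q) (s : ℝ) :
    |∫ x, kerK x s * q x| ≤ s ^ 2 * ∫ x, ‖q x‖ := by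
  rw [← integral_const_mul, ← Real.norm_eq_abs]
  refine norm_integral_le_of_norm_le (hq.norm.const_mul _) (Eventually.of_forall fun x => ?_)
  rw [norm_mul]
  exact mul_le_mul_of_nonneg_right (kerK_bound x s) (norm_nonneg _)

/-- The main one-variable computation. -/
lemma aux_ode (A B D E : ℝ → ℝ) (Q : ℝ) (hB : Continuous B)
    (hBi : ∀ k : ℕ, Integrable (fun s => s ^ k * B s))
    (hA : ∀ s, HasDerivAt A (-B s) s) (hE : ∀ s, HasDerivAt E (A s) s)
    (hD : ∀ s, HasDerivAt D (E s) s) (hA0 : ∀ s, 0 < s → A s = ∫ r in Ioi s, B r)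
    (hE0 : E 0 = 0) (hDb : ∀ s, |D s| ≤ s ^ 2 * Q) :
    ∫ s in Ioi (0 : ℝ), D s * B s = (∫ s in Ioi (0 : ℝ), s * B s) ^ 2 / 2 := by
  have hD0 : D 0 = 0 := by
    have := hDb 0
    simpa using this
  have hDc : Continuous D := continuous_iff_continuousAt.2 fun s => (hD s).continuousAt
  set K := ∫ s, ‖s ^ 3 * B s‖ with hK
  have hAb : ∀ s, 0 < s → s ^ 3 * |A s| ≤ K := by
    intro s hs
    rw [hA0 s hs]
    calc s ^ 3 * |∫ r in Ioi s, B r| = |∫ r in Ioi s, s ^ 3 * B r| := by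
          rw [integral_const_mul, abs_mul, abs_of_pos (by positivity : 0 < s ^ 3)]
      _ ≤ ∫ r in Ioi s, ‖r ^ 3 * B r‖ := by
          rw [← Real.norm_eq_abs]
          refine norm_integral_le_of_norm_le (hBi 3).norm.integrableOn ?_
          refine (ae_restrict_iff' measurableSet_Ioi).2 (Eventually.of_forall fun r hr => ?_)
          have hr : s < r := hr
          rw [norm_mul, norm_mul]
          refine mul_le_mul_of_nonneg_right ?_ (norm_nonneg _)
          rw [Real.norm_of_nonneg (by positivity),
            Real.norm_of_nonneg (pow_nonneg (hs.trans hr).le 3)]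
          gcongr
      _ ≤ K := setIntegral_le_integral (hBi 3).norm (Eventually.of_forall fun _ => norm_nonneg _)
  have hs2A : Tendsto (fun s => s ^ 2 * A s) atTop (𝓝 0) := by
    refine squeeze_zero_norm' (a := fun s => K / s) ?_ (tendsto_const_nhds.div_atTop tendsto_id)
    filter_upwards [eventually_gt_atTop 0] with s hs
    rw [norm_mul, Real.norm_of_nonneg (by positivity), Real.norm_eq_abs, le_div_iff₀ hs]
    have := hAb s hs
    linarith
  have hsA : Tendsto (fun s => s * A s) atTop (𝓝 0) := by
    have := hs2A.mul tendsto_inv_atTop_zero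
    rw [mul_zero] at this
    refine this.congr' ?_
    filter_upwards [eventually_gt_atTop 0] with s hs
    field_simp
  have hV : ∀ s, HasDerivAt (fun s => E s - s * A s) (s * B s) s := by
    intro s
    refine ((hE s).sub ((hasDerivAt_id s).mul (hA s))).congr_deriv ?_
    simp
  have hBi1 : Integrable (fun s => s * B s) := by simpa using hBi 1
  have hVt : Tendsto (fun s => E s - s * A s) atTop (𝓝 (∫ s in Ioi (0 : ℝ), s * B s)) := by
    refine (intervalIntegral_tendsto_integral_Ioi 0 hBi1.integrableOn tendsto_id).congr fun s => ?_
    rw [intervalIntegral.integral_eq_sub_of_hasDerivAt (fun x _ => hV x) hBi1.intervalIntegrable]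
    simp [hE0]
  have hEt : Tendsto E atTop (𝓝 (∫ s in Ioi (0 : ℝ), s * B s)) := by
    simpa using hVt.add hsA
  have hAD : Tendsto (fun s => A s * D s) atTop (𝓝 0) := by
    have h := (hs2A.norm).mul_const Q
    rw [norm_zero, zero_mul] at h
    refine squeeze_zero_norm (fun s => ?_) h
    rw [norm_mul, norm_mul, Real.norm_eq_abs (D s), Real.norm_of_nonneg (sq_nonneg s)]
    nlinarith [hDb s, norm_nonneg (A s)]
  have hW : ∀ s, HasDerivAt (fun s => E s ^ 2 / 2 - A s * D s) (D s * B s) s := by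
    intro s
    refine ((((hE s).pow 2).div_const 2).sub ((hA s).mul (hD s))).congr_deriv ?_
    simp; ring
  have hWt : Tendsto (fun s => E s ^ 2 / 2 - A s * D s) atTop
      (𝓝 ((∫ s in Ioi (0 : ℝ), s * B s) ^ 2 / 2)) := by
    simpa using ((hEt.pow 2).div_const 2).sub hAD
  have hDB : Integrable (fun s => D s * B s) := by
    refine Integrable.mono' ((hBi 2).norm.const_mul Q) (hDc.mul hB).aestronglyMeasurable
      (Eventually.of_forall fun s => ?_)
    rw [norm_mul, norm_mul, Real.norm_of_nonneg (sq_nonneg s), Real.norm_eq_abs (D s)]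
    nlinarith [hDb s, norm_nonneg (B s)]
  rw [integral_Ioi_of_hasDerivAt_of_tendsto' (fun s _ => hW s) hDB.integrableOn hWt]
  simp [hE0, hD0]

/-- For an odd Schwartz function `ω` with `u_x = Hω`, the function
`x ↦ (u_x(x) − u_x(0))·ω(x)/x³` extends continuously to `0`, is integrable,
and its integral equals `(π/2)·ω'(0)²`; in particular it is nonnegative and
vanishes if `ω'(0) = 0`. -/
theorem integral_velocity_cancellation_cubic (ω : SchwartzMap ℝ ℝ)
    (hodd : ∀ x : ℝ, ω (-x) = -ω x) (ux : ℝ → ℝ)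
    (hH : ∀ x : ℝ, HilbertAt (fun y => ω y) x (ux x)) :
    ∃ g : ℝ → ℝ, Continuous g ∧
      (∀ x : ℝ, x ≠ 0 → g x = (ux x - ux 0) * ω x / x^3) ∧
      Integrable g ∧
      (∫ x : ℝ, g x = (Real.pi / 2) * (deriv (fun y => ω y) 0)^2) ∧
      (0 ≤ ∫ x : ℝ, g x) ∧
      (deriv (fun y => ω y) 0 = 0 → ∫ x : ℝ, g x = 0) := by
  have hω0 : ω 0 = 0 := by
    have := hodd 0
    simp at this; linarith
  have hi : Integrable (fun x => ω x) := ω.integrable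
  set q : ℝ → ℝ := dslope ω 0 with hqdef
  have hqc : Continuous q := aux_continuous_dslope _ ω.continuous ω.differentiable.differentiableAt
  have hq : Integrable q :=
    aux_integrable_dslope _ ω.continuous ω.differentiable.differentiableAt hω0 hi
  have hmul : ∀ x, x * q x = ω x := aux_mul_dslope _ hω0
  set B := sineT ω with hBdef
  have hBc : Continuous B := sineT_continuous ω hodd
  have hBi : ∀ k : ℕ, Integrable (fun s => s ^ k * B s) := sineT_integrable ω hodd
  have hBi0 : Integrable B := by simpa using hBi 0
  have hux : ∀ x, ux x = -(1 / π) * ∫ s in Ioi (0 : ℝ), Real.cos (x * s) * B s :=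
    fun x => aux_ux ω hodd x _ (hH x)
  have hKB : ∀ x s, ‖kerK x s * B s‖ ≤ ‖s ^ 2 * B s‖ := by
    intro x s
    rw [norm_mul, norm_mul, Real.norm_of_nonneg (sq_nonneg s)]
    exact mul_le_mul_of_nonneg_right (kerK_bound x s) (norm_nonneg _)
  have hKc : Continuous (fun p : ℝ × ℝ => kerK p.1 p.2 * B p.2) :=
    kerK_continuous.mul (hBc.comp continuous_snd)
  set G : ℝ → ℝ := fun x => ∫ s in Ioi (0 : ℝ), kerK x s * B s with hG
  have hGc : Continuous G := by
    refine continuous_of_dominated (bound := fun s => ‖s ^ 2 * B s‖) (fun x => ?_)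
      (fun x => Eventually.of_forall fun s => hKB x s) (hBi 2).norm.integrableOn
      (Eventually.of_forall fun s => ?_)
    · exact (hKc.comp (by fun_prop : Continuous fun s : ℝ => (x, s))).aestronglyMeasurable
    · exact hKc.comp (by fun_prop : Continuous fun x : ℝ => (x, s))
  have hF : Integrable (Function.uncurry fun x s => q x * (kerK x s * B s))
      (volume.prod (volume.restrict (Ioi (0 : ℝ)))) := by
    refine Integrable.mono' (hq.norm.mul_prod (hBi 2).norm.integrableOn)
      ((hqc.comp continuous_fst).mul hKc).aestronglyMeasurable (Eventually.of_forall fun p => ?_)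
    simp only [Function.uncurry]
    rw [norm_mul]
    exact mul_le_mul_of_nonneg_left (hKB _ _) (norm_nonneg _)
  have hgi : Integrable (fun x => q x * ((1 / π) * G x)) := by
    have h := hF.integral_prod_left.const_mul (1 / π)
    refine h.congr (Eventually.of_forall fun x => ?_)
    simp only [Function.uncurry, integral_const_mul, hG]
    ring
  have hval : ∫ x, q x * ((1 / π) * G x) = (π / 2) * (deriv (fun y => ω y) 0) ^ 2 := by
    have h1 : ∫ x, q x * ((1 / π) * G x)
        = (1 / π) * ∫ x, ∫ s in Ioi (0 : ℝ), q x * (kerK x s * B s) := by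
      rw [← integral_const_mul]
      congr 1; ext x
      rw [integral_const_mul]; ring
    rw [h1, integral_integral_swap hF]
    have h2 : ∀ s, ∫ x, q x * (kerK x s * B s) = (∫ x, kerK x s * q x) * B s := by
      intro s
      rw [← integral_mul_const]
      congr 1; ext x; ring
    simp_rw [h2]
    rw [aux_ode (fun s => ∫ x, Real.cos (x * s) * q x) B (fun s => ∫ x, kerK x s * q x)
      (fun s => ∫ x, s * Real.sinc (x * s) * q x) (∫ x, ‖q x‖) hBc hBi
      (fun s => aux_hasDerivAt_cos q ω hq hi hmul s) (aux_hasDerivAt_E q hq)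
      (aux_hasDerivAt_D q hq)
      (fun s _ => (aux_integral_sin q ω hq hi hmul s hBi0.integrableOn).symm)
      (by simp) (aux_D_bound q hq), sineT_deriv ω hodd]
    field_simp
  refine ⟨fun x => q x * ((1 / π) * G x), by fun_prop, fun x hx => ?_, hgi, hval, ?_, ?_⟩
  · have h1 : ux x - ux 0 = (1 / π) * (x ^ 2 * G x) := by
      have hs : ∀ s, x ^ 2 * (kerK x s * B s) = Real.cos (0 * s) * B s - Real.cos (x * s) * B s := by
        intro s
        rw [kerK_eq x s hx]; simp; field_simp
      have hI : x ^ 2 * G x = (∫ s in Ioi (0 : ℝ), Real.cos (0 * s) * B s)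
          - ∫ s in Ioi (0 : ℝ), Real.cos (x * s) * B s := by
        rw [← integral_sub (aux_integrable_cosB ω hodd 0).integrableOn
          (aux_integrable_cosB ω hodd x).integrableOn]
        simp only [hG]
        rw [← integral_const_mul]
        exact integral_congr_ae (Eventually.of_forall hs)
      rw [hI, hux x, hux 0]
      ring
    rw [h1, ← hmul x]
    field_simp
  · rw [hval]; positivity
  · intro h; rw [hval, h]; simp
end

section
/- Let g: ℝ → ℝ be a Schwartz function. Then the principal value integral PV ∫_ℝ (Hg)(x)·g(x)/x dx = lim_{ε→0⁺} ∫_{|x|>ε} (Hg)(x)·g(x)/x dx exists and equals (π/2)·( g(0)² − (Hg)(0)² ). In particular, if g(0) = 0 then PV ∫_ℝ (Hg)(x)·g(x)/x dx = −(π/2)·(Hg)(0)². -/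
open MeasureTheory Filter Real Set

lemma odd_symm (G k : ℝ → ℂ) (hk : ∀ t, k (-t) = -k t) (hi : Integrable (fun t => G t * k t)) :
    ∫ t, G t * k t = ∫ t, (G t - G (-t)) / 2 * k t := by
  have h1 : ∫ t, G (-t) * k t = -∫ t, G t * k t := by
    rw [← integral_neg_eq_self (fun t => G t * k t), ← integral_neg]
    congr 1; ext t; rw [hk]; ring
  have hi2 : Integrable (fun t => G (-t) * k t) := by
    have := hi.comp_neg.neg
    refine this.congr (Eventually.of_forall fun t => ?_)
    simp [hk]
  have h2 : ∀ t, (G t - G (-t)) / 2 * k t = (1/2 : ℂ) * (G t * k t - G (-t) * k t) := by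
    intro t; ring
  simp_rw [h2]
  rw [integral_const_mul, integral_sub hi hi2, h1]; ring

noncomputable def Dbound (G : ℝ → ℂ) (L : ℝ) (t : ℝ) : ℝ :=
  (Icc (-1:ℝ) 1).indicator (fun _ => L) t + (‖G t‖ + ‖G (-t)‖) / 2

lemma Dbound_int (G : ℝ → ℂ) (L : ℝ) (hi : Integrable G) : Integrable (Dbound G L) := by
  unfold Dbound
  refine Integrable.add ?_ ((hi.norm.add hi.comp_neg.norm).div_const 2)
  exact (integrable_indicator_iff measurableSet_Icc).2 (by simp)

lemma Dbound_integral (G : ℝ → ℂ) (L : ℝ) (hi : Integrable G) :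
    ∫ t, Dbound G L t = 2 * L + ∫ t, ‖G t‖ := by
  unfold Dbound
  have e2 : Integrable (fun t => (‖G t‖ + ‖G (-t)‖) / 2) :=
    (hi.norm.add hi.comp_neg.norm).div_const 2
  rw [integral_add ((integrable_indicator_iff measurableSet_Icc).2 (by simp))
    e2, integral_indicator measurableSet_Icc,
    integral_div, integral_add hi.norm hi.comp_neg.norm,
    integral_neg_eq_self (fun t => ‖G t‖)]
  simp
  norm_num

lemma Dbound_le (G : ℝ → ℂ) (L : ℝ) (hL0 : 0 ≤ L) (hL : ∀ x y, ‖G x - G y‖ ≤ L * |x - y|) (t : ℝ) (k : ℂ)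
    (hk : ‖k‖ ≤ |t|⁻¹) : ‖(G t - G (-t)) / 2 * k‖ ≤ Dbound G L t := by
  rw [norm_mul, norm_div]
  have h2 : ‖(2:ℂ)‖ = 2 := by simp
  rw [h2]
  unfold Dbound
  by_cases ht : t ∈ Icc (-1:ℝ) 1
  · rw [indicator_of_mem ht]
    have h := hL t (-t)
    have e : |t - -t| = 2 * |t| := by
      rw [show t - -t = 2 * t by ring, abs_mul]; simp
    rw [e] at h
    have : ‖G t - G (-t)‖ / 2 * ‖k‖ ≤ L * |t| * |t|⁻¹ := by
      gcongr
      linarith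
    have h3 : L * |t| * |t|⁻¹ ≤ L := by
      rw [mul_assoc]
      exact mul_le_of_le_one_right hL0 mul_inv_le_one
    have := norm_nonneg (G t)
    have := norm_nonneg (G (-t))
    linarith
  · rw [indicator_of_notMem ht]
    have h1 : 1 ≤ |t| := by
      by_contra h
      push Not at h
      exact ht ⟨(abs_lt.1 h).1.le, (abs_lt.1 h).2.le⟩
    have h3 : ‖k‖ ≤ 1 := hk.trans (inv_le_one_of_one_le₀ h1)
    have := norm_sub_le (G t) (G (-t))
    have : ‖G t - G (-t)‖ / 2 * ‖k‖ ≤ ‖G t - G (-t)‖ / 2 := mul_le_of_le_one_right (by positivity) h3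
    linarith

noncomputable def PVI (G : ℝ → ℂ) : ℂ := ∫ t, (G t - G (-t)) / 2 * ((t:ℂ))⁻¹

lemma odd_tendsto (G : ℝ → ℂ) (L : ℝ) (hL0 : 0 ≤ L) (hL : ∀ x y, ‖G x - G y‖ ≤ L * |x - y|)
    (hi : Integrable G) (k : ℝ → ℝ → ℂ) (hodd : ∀ δ t, k δ (-t) = - k δ t)
    (hm : ∀ δ, Measurable (k δ)) (hb : ∀ δ > 0, ∀ t, ‖k δ t‖ ≤ δ⁻¹)
    (hb' : ∀ δ > 0, ∀ t, ‖k δ t‖ ≤ |t|⁻¹)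
    (hlim : ∀ t ≠ 0, Tendsto (fun δ => k δ t) (nhdsWithin 0 (Ioi 0)) (nhds (t:ℂ)⁻¹)) :
    Tendsto (fun δ => ∫ t, G t * k δ t) (nhdsWithin 0 (Ioi 0)) (nhds (PVI G)) := by
  have h : Tendsto (fun δ => ∫ t, (G t - G (-t)) / 2 * k δ t) (nhdsWithin 0 (Ioi 0)) (nhds (PVI G)) := by
    refine tendsto_integral_filter_of_dominated_convergence (Dbound G L) ?_ ?_ (Dbound_int G L hi) ?_
    · refine Eventually.of_forall fun δ => ?_
      exact ((hi.sub hi.comp_neg).div_const 2).aestronglyMeasurable.mul (hm δ).aestronglyMeasurable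
    · filter_upwards [self_mem_nhdsWithin] with δ hδ
      exact Eventually.of_forall fun t => Dbound_le G L hL0 hL t _ (hb' δ hδ t)
    · refine Eventually.of_forall fun t => ?_
      by_cases ht : t = 0
      · subst ht; simp
      · exact (hlim t ht).const_mul _
  refine h.congr' ?_
  filter_upwards [self_mem_nhdsWithin] with δ hδ
  refine (odd_symm G (k δ) (hodd δ) ?_).symm
  exact hi.mul_bdd (hm δ).aestronglyMeasurable (Eventually.of_forall (hb δ hδ))

lemma odd_bound (G : ℝ → ℂ) (L : ℝ) (hL0 : 0 ≤ L) (hL : ∀ x y, ‖G x - G y‖ ≤ L * |x - y|)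
    (hi : Integrable G) (k : ℝ → ℂ) (hodd : ∀ t, k (-t) = - k t)
    (hm : Measurable k) (C : ℝ) (hb : ∀ t, ‖k t‖ ≤ C)
    (hb' : ∀ t, ‖k t‖ ≤ |t|⁻¹) : ‖∫ t, G t * k t‖ ≤ 2 * L + ∫ t, ‖G t‖ := by
  rw [odd_symm G k hodd (hi.mul_bdd hm.aestronglyMeasurable (Eventually.of_forall hb)),
    ← Dbound_integral G L hi]
  exact norm_integral_le_of_norm_le (Dbound_int G L hi)
    (Eventually.of_forall fun t => Dbound_le G L hL0 hL t _ (hb' t))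

/-- odd part of the Cauchy kernel -/
noncomputable def kQ (δ t : ℝ) : ℂ := ((t / (t ^ 2 + δ ^ 2) : ℝ) : ℂ)

lemma kQ_b (δ : ℝ) (hδ : 0 < δ) (t : ℝ) : ‖kQ δ t‖ ≤ δ⁻¹ := by
  have hp : 0 < t ^ 2 + δ ^ 2 := by positivity
  rw [kQ, Complex.norm_real, norm_eq_abs, abs_div, abs_of_pos hp, div_le_iff₀ hp, inv_mul_eq_div,
    le_div_iff₀ hδ, ← sq_abs t]
  nlinarith [sq_nonneg (|t| - δ), abs_nonneg t]

lemma kQ_b' (δ : ℝ) (hδ : 0 < δ) (t : ℝ) : ‖kQ δ t‖ ≤ |t|⁻¹ := by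
  have hp : 0 < t ^ 2 + δ ^ 2 := by positivity
  by_cases ht : t = 0
  · subst ht; simp [kQ]
  have h0 : 0 < |t| := abs_pos.2 ht
  rw [kQ, Complex.norm_real, norm_eq_abs, abs_div, abs_of_pos hp, div_le_iff₀ hp, inv_mul_eq_div,
    le_div_iff₀ h0, ← sq_abs t]
  nlinarith [sq_nonneg δ]

lemma kQ_m (δ : ℝ) : Measurable (kQ δ) := by
  unfold kQ; fun_prop

lemma kQ_odd (δ t : ℝ) : kQ δ (-t) = - kQ δ t := by
  simp [kQ, neg_div]

lemma kQ_lim (t : ℝ) (ht : t ≠ 0) :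
    Tendsto (fun δ => kQ δ t) (nhdsWithin 0 (Ioi 0)) (nhds (t:ℂ)⁻¹) := by
  have : ContinuousAt (fun δ : ℝ => kQ δ t) 0 := by
    unfold kQ
    refine Complex.continuous_ofReal.continuousAt.comp ?_
    refine ContinuousAt.div (by fun_prop) (by fun_prop) ?_
    positivity
  have h := this.tendsto
  have e : kQ 0 t = (t:ℂ)⁻¹ := by
    rw [kQ, ← Complex.ofReal_inv]; congr 1; field_simp; ring
  rw [e] at h
  exact h.mono_left nhdsWithin_le_nhds

noncomputable def kT (δ t : ℝ) : ℂ := {t : ℝ | δ < |t|}.indicator (fun t : ℝ => (t:ℂ)⁻¹) t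

lemma kset_m (δ : ℝ) : MeasurableSet {t : ℝ | δ < |t|} :=
  measurableSet_lt measurable_const (by fun_prop)

lemma kT_b' (δ : ℝ) (_hδ : 0 < δ) (t : ℝ) : ‖kT δ t‖ ≤ |t|⁻¹ := by
  refine (norm_indicator_le_norm_self _ _).trans ?_
  simp

lemma kT_b (δ : ℝ) (hδ : 0 < δ) (t : ℝ) : ‖kT δ t‖ ≤ δ⁻¹ := by
  by_cases h : t ∈ {t : ℝ | δ < |t|}
  · refine (kT_b' δ hδ t).trans ?_
    have h : δ < |t| := h
    gcongr
  · rw [kT, indicator_of_notMem h]; simp; positivity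

lemma kT_m (δ : ℝ) : Measurable (kT δ) := by
  unfold kT
  refine Measurable.indicator ?_ (kset_m δ)
  fun_prop

lemma kT_odd (δ t : ℝ) : kT δ (-t) = - kT δ t := by
  simp only [kT, indicator, mem_ofPred_eq, abs_neg]
  split_ifs <;> simp [inv_neg]

lemma kT_lim (t : ℝ) (ht : t ≠ 0) :
    Tendsto (fun δ => kT δ t) (nhdsWithin 0 (Ioi 0)) (nhds (t:ℂ)⁻¹) := by
  refine Tendsto.congr' ?_ tendsto_const_nhds
  have : ∀ᶠ δ in nhds (0:ℝ), δ < |t| := eventually_lt_nhds (abs_pos.2 ht)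
  filter_upwards [nhdsWithin_le_nhds this] with δ hδ
  rw [kT, indicator_of_mem]; exact hδ

lemma pv_tendsto (G : ℝ → ℂ) (L : ℝ) (hL0 : 0 ≤ L) (hL : ∀ x y, ‖G x - G y‖ ≤ L * |x - y|)
    (hi : Integrable G) :
    Tendsto (fun δ => ∫ t in {t : ℝ | δ < |t|}, G t / t) (nhdsWithin 0 (Ioi 0)) (nhds (PVI G)) := by
  refine (odd_tendsto G L hL0 hL hi kT kT_odd kT_m kT_b kT_b' kT_lim).congr fun δ => ?_
  rw [← integral_indicator (kset_m δ)]
  congr 1; ext t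
  simp only [kT, indicator]
  split_ifs <;> simp [div_eq_mul_inv]

/-- Poisson kernel -/
noncomputable def kP (δ t : ℝ) : ℂ := ((δ / (t ^ 2 + δ ^ 2) : ℝ) : ℂ)

lemma kP_subst (G : ℝ → ℂ) (δ : ℝ) (hδ : 0 < δ) :
    ∫ t, G t * kP δ t = ∫ s, G (δ * s) * (((1 + s ^ 2)⁻¹ : ℝ) : ℂ) := by
  have h := Measure.integral_comp_mul_left (fun y => G y * (((1 + (y / δ) ^ 2)⁻¹ : ℝ) : ℂ)) δ
  have e : ∀ s : ℝ, δ * s / δ = s := fun s => by field_simp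
  simp only [e] at h
  rw [h, abs_of_pos (by positivity), ← integral_smul]
  congr 1; ext t
  have : δ / (t ^ 2 + δ ^ 2) = δ⁻¹ * (1 + (t / δ) ^ 2)⁻¹ := by
    field_simp; ring
  rw [kP, this, Complex.real_smul]; push_cast; ring

lemma kP_tendsto (G : ℝ → ℂ) (M : ℝ) (hM : ∀ x, ‖G x‖ ≤ M) (hc : Continuous G) :
    Tendsto (fun δ => ∫ t, G t * kP δ t) (nhdsWithin 0 (Ioi 0)) (nhds (π * G 0)) := by
  have h : Tendsto (fun δ : ℝ => ∫ s, G (δ * s) * (((1 + s ^ 2)⁻¹ : ℝ) : ℂ)) (nhdsWithin 0 (Ioi 0))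
      (nhds (∫ s : ℝ, G 0 * (((1 + s ^ 2)⁻¹ : ℝ) : ℂ))) := by
    refine tendsto_integral_filter_of_dominated_convergence (fun s : ℝ => M * (1 + s ^ 2)⁻¹) ?_ ?_
      (integrable_inv_one_add_sq.const_mul M) ?_
    · refine Eventually.of_forall fun δ => ?_
      refine (AEStronglyMeasurable.mul ?_ integrable_inv_one_add_sq.ofReal.aestronglyMeasurable)
      exact (hc.comp (by fun_prop)).aestronglyMeasurable
    · refine Eventually.of_forall fun δ => Eventually.of_forall fun s => ?_
      rw [norm_mul, Complex.norm_real, norm_of_nonneg (by positivity)]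
      gcongr; exact hM _
    · refine Eventually.of_forall fun s => Tendsto.mul_const _ ?_
      have : Continuous fun δ : ℝ => G (δ * s) := hc.comp (by fun_prop)
      have := (this.tendsto 0).mono_left (nhdsWithin_le_nhds (s := Ioi 0))
      simpa using this
  rw [integral_const_mul, integral_complex_ofReal, integral_univ_inv_one_add_sq, mul_comm] at h
  refine h.congr' ?_
  filter_upwards [self_mem_nhdsWithin] with δ hδ
  rw [kP_subst G δ hδ]

lemma kP_bound (G : ℝ → ℂ) (M : ℝ) (hM : ∀ x, ‖G x‖ ≤ M) (δ : ℝ) (hδ : 0 < δ) :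
    ‖∫ t, G t * kP δ t‖ ≤ M * π := by
  rw [kP_subst G δ hδ, ← integral_univ_inv_one_add_sq, ← integral_const_mul]
  refine norm_integral_le_of_norm_le (integrable_inv_one_add_sq.const_mul M) (Eventually.of_forall fun s => ?_)
  rw [norm_mul, Complex.norm_real, norm_of_nonneg (by positivity)]
  gcongr; exact hM _

lemma kP_int (G : ℝ → ℂ) (hi : Integrable G) (δ : ℝ) (hδ : 0 < δ) :
    Integrable (fun t => G t * kP δ t) := by
  refine hi.mul_bdd (c := δ⁻¹) (Measurable.aestronglyMeasurable (by unfold kP; fun_prop)) (Eventually.of_forall fun t => ?_)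
  have hp : 0 < t ^ 2 + δ ^ 2 := by positivity
  rw [kP, Complex.norm_real, norm_of_nonneg (by positivity), div_le_iff₀ hp, inv_mul_eq_div, le_div_iff₀ hδ]
  nlinarith

lemma cauchy_split (G : ℝ → ℂ) (hi : Integrable G) (δ : ℝ) (hδ : 0 < δ) :
    ∫ t, G t / (t + δ * Complex.I) = (∫ t, G t * kQ δ t) - Complex.I * ∫ t, G t * kP δ t := by
  rw [← integral_const_mul, ← integral_sub
    (hi.mul_bdd (kQ_m δ).aestronglyMeasurable (Eventually.of_forall (kQ_b δ hδ)))
    ((kP_int G hi δ hδ).const_mul _)]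
  congr 1; ext t
  have h1 : (t:ℂ) + δ * Complex.I ≠ 0 := by
    intro h; have := congrArg Complex.im h; simp at this; exact hδ.ne' this
  have h2 : (t:ℂ) ^ 2 + δ ^ 2 ≠ 0 := by
    have : t ^ 2 + δ ^ 2 ≠ 0 := by positivity
    exact_mod_cast this
  simp only [kQ, kP]; push_cast
  field_simp
  linear_combination G t * (δ : ℂ) ^ 2 * (Complex.I_sq)

lemma cauchy_tendsto (G : ℝ → ℂ) (L M : ℝ) (hL0 : 0 ≤ L) (hL : ∀ x y, ‖G x - G y‖ ≤ L * |x - y|)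
    (hM : ∀ x, ‖G x‖ ≤ M) (hc : Continuous G) (hi : Integrable G) :
    Tendsto (fun δ : ℝ => ∫ t : ℝ, G t / (t + δ * Complex.I)) (nhdsWithin 0 (Ioi 0))
      (nhds (PVI G - Complex.I * (π * G 0))) := by
  refine ((odd_tendsto G L hL0 hL hi kQ kQ_odd kQ_m kQ_b kQ_b' kQ_lim).sub
    ((kP_tendsto G M hM hc).const_mul Complex.I)).congr' ?_
  filter_upwards [self_mem_nhdsWithin] with δ hδ
  rw [cauchy_split G hi δ hδ]

lemma cauchy_bound (G : ℝ → ℂ) (L M : ℝ) (hL0 : 0 ≤ L) (hL : ∀ x y, ‖G x - G y‖ ≤ L * |x - y|)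
    (hM : ∀ x, ‖G x‖ ≤ M) (hi : Integrable G) (δ : ℝ) (hδ : 0 < δ) :
    ‖∫ t : ℝ, G t / (t + δ * Complex.I)‖ ≤ 2 * L + (∫ t, ‖G t‖) + M * π := by
  rw [cauchy_split G hi δ hδ]
  refine (norm_sub_le _ _).trans (add_le_add ?_ ?_)
  · exact odd_bound G L hL0 hL hi _ (kQ_odd δ) (kQ_m δ) _ (kQ_b δ hδ) (kQ_b' δ hδ)
  · rw [norm_mul, Complex.norm_I, one_mul]; exact kP_bound G M hM δ hδ

lemma schw_bdd (f : SchwartzMap ℝ ℝ) : ∃ M, 0 ≤ M ∧ ∀ x, ‖f x‖ ≤ M := by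
  obtain ⟨C, hC, h⟩ := f.decay 0 0
  exact ⟨C, hC.le, fun x => by simpa using h x⟩

lemma schw_lip (f : SchwartzMap ℝ ℝ) : ∃ L, 0 ≤ L ∧ ∀ x y, ‖f x - f y‖ ≤ L * |x - y| := by
  obtain ⟨C, hC, h⟩ := schw_bdd (SchwartzMap.derivCLM ℝ ℝ f)
  refine ⟨C, hC, fun x y => ?_⟩
  exact Convex.norm_image_sub_le_of_norm_deriv_le (s := univ) (fun x _ => f.differentiableAt)
    (fun x _ => by simpa using h x) convex_univ (mem_univ y) (mem_univ x)

noncomputable def S (f : SchwartzMap ℝ ℝ) (z : ℂ) : ℂ := ∫ y : ℝ, (f y : ℂ) / (z - y)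

lemma S_eq (f : SchwartzMap ℝ ℝ) (x δ : ℝ) :
    S f (x + δ * Complex.I) = ∫ t : ℝ, ((f (x - t) : ℝ) : ℂ) / (t + δ * Complex.I) := by
  rw [S, ← integral_sub_left_eq_self _ volume x]
  congr 1; ext t; congr 1; push_cast; ring

lemma S_bound (f : SchwartzMap ℝ ℝ) : ∃ C, 0 ≤ C ∧ ∀ z : ℂ, 0 < z.im → ‖S f z‖ ≤ C := by
  obtain ⟨M, hM0, hM⟩ := schw_bdd f
  obtain ⟨L, hL0, hL⟩ := schw_lip f
  refine ⟨2 * L + (∫ t, ‖f t‖) + M * π, by positivity, fun z hz => ?_⟩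
  have := cauchy_bound (fun t => ((f (z.re - t) : ℝ) : ℂ)) L M hL0 ?_ ?_ ?_ z.im hz
  · rw [← S_eq, Complex.re_add_im] at this
    simp only [Complex.norm_real] at this
    rwa [integral_sub_left_eq_self (fun t => ‖f t‖) volume z.re] at this
  · intro x y
    rw [← Complex.ofReal_sub, Complex.norm_real]
    refine (hL _ _).trans (le_of_eq ?_)
    rw [show z.re - x - (z.re - y) = -(x - y) by ring, abs_neg]
  · intro x; rw [Complex.norm_real]; exact hM _
  · exact (f.integrable.comp_sub_left z.re).ofReal

lemma sub_ne (z : ℂ) (hz : 0 < z.im) (y : ℝ) : z - y ≠ 0 := by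
  intro h; have := congrArg Complex.im h; simp at this; exact hz.ne' this

lemma im_le_sub (z : ℂ) (y : ℝ) : z.im ≤ ‖z - y‖ := by
  have := Complex.im_le_norm (z - y)
  simpa using this

lemma ker_norm (z : ℂ) (c : ℝ) (hc : 0 < c) (hz : c ≤ z.im) (y : ℝ) : ‖(z - y)⁻¹‖ ≤ c⁻¹ := by
  rw [norm_inv]
  have := im_le_sub z y
  gcongr
  linarith

lemma ker_cont (z : ℂ) (hz : 0 < z.im) : Continuous (fun y : ℝ => (z - y)⁻¹) :=
  Continuous.inv₀ (by fun_prop) (sub_ne z hz)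

lemma int0 (f : SchwartzMap ℝ ℝ) : Integrable (fun y : ℝ => (f y : ℂ)) :=
  f.integrable.ofReal

lemma int1 (f : SchwartzMap ℝ ℝ) (z : ℂ) (hz : 0 < z.im) :
    Integrable (fun y : ℝ => (f y : ℂ) * (z - y)⁻¹) :=
  f.integrable.ofReal.mul_bdd (ker_cont z hz).aestronglyMeasurable
    (Eventually.of_forall (ker_norm z z.im hz le_rfl))

lemma int2 (f : SchwartzMap ℝ ℝ) (z : ℂ) (hz : 0 < z.im) :
    Integrable (fun y : ℝ => (f y : ℂ) * ((z - y)⁻¹) ^ 2) := by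
  refine f.integrable.ofReal.mul_bdd (c := (z.im⁻¹)^2) ((ker_cont z hz).pow 2).aestronglyMeasurable
    (Eventually.of_forall fun y => ?_)
  rw [norm_pow]
  gcongr
  exact (ker_norm z z.im hz le_rfl y)

lemma S_parts (f : SchwartzMap ℝ ℝ) (z : ℂ) (hz : 0 < z.im) :
    ∫ y : ℝ, (f y : ℂ) * ((z - y)⁻¹) ^ 2 = - S (SchwartzMap.derivCLM ℝ ℝ f) z := by
  unfold S
  simp only [div_eq_mul_inv]
  refine integral_mul_deriv_eq_deriv_mul_of_integrable (u := fun y => (f y : ℂ))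
    (u' := fun y => ((SchwartzMap.derivCLM ℝ ℝ f y : ℝ) : ℂ)) (v := fun y => (z - y)⁻¹)
    (v' := fun y => ((z - y)⁻¹) ^ 2) ?_ ?_ (int2 f z hz) (int1 _ z hz) (int1 f z hz)
  · intro x _
    rw [SchwartzMap.derivCLM_apply]
    exact f.differentiableAt.hasDerivAt.ofReal_comp
  · intro x _
    have h := ((hasDerivAt_id (x:ℂ)).const_sub z).inv (sub_ne z hz x)
    have h2 := h.comp_ofReal
    refine h2.congr_deriv ?_
    simp [div_eq_mul_inv]

lemma S_deriv (f : SchwartzMap ℝ ℝ) (z : ℂ) (hz : 0 < z.im) :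
    HasDerivAt (S f) (S (SchwartzMap.derivCLM ℝ ℝ f) z) z := by
  have hs : {w : ℂ | z.im / 2 < w.im} ∈ nhds z :=
    (isOpen_lt continuous_const Complex.continuous_im).mem_nhds (by simp; linarith)
  have h := hasDerivAt_integral_of_dominated_loc_of_deriv_le (μ := volume) (x₀ := z)
    (𝕜 := ℂ) (F := fun (w : ℂ) (y : ℝ) => (f y : ℂ) * (w - y)⁻¹)
    (F' := fun (w : ℂ) (y : ℝ) => -((f y : ℂ) * ((w - y)⁻¹) ^ 2))
    (bound := fun y => ‖f y‖ * ((z.im / 2)⁻¹) ^ 2) hs ?_ (int1 f z hz)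
    (int2 f z hz).neg.aestronglyMeasurable ?_ (f.integrable.norm.mul_const _) ?_
  · have h := h.2
    rw [integral_neg, S_parts f z hz, neg_neg] at h
    unfold S at h ⊢
    simpa only [div_eq_mul_inv] using h
  · filter_upwards [hs] with w hw
    have hw : z.im / 2 < w.im := hw
    exact (int1 f w (by linarith)).aestronglyMeasurable
  · refine Eventually.of_forall fun y w hw => ?_
    have hw : z.im / 2 < w.im := hw
    rw [norm_neg, norm_mul, norm_pow, Complex.norm_real]
    gcongr
    exact ker_norm w _ (by linarith) hw.le y
  · refine Eventually.of_forall fun y w hw => ?_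
    have hw : z.im / 2 < w.im := hw
    have h := (((hasDerivAt_id w).sub_const (y:ℂ)).inv (sub_ne w (by linarith) y)).const_mul (f y : ℂ)
    refine h.congr_deriv ?_
    simp [div_eq_mul_inv]

lemma S_decay (f : SchwartzMap ℝ ℝ) : ∃ C, 0 ≤ C ∧ ∀ z : ℂ, 0 < z.im → ‖z‖ * ‖S f z‖ ≤ C := by
  have ht : Function.HasTemperateGrowth (fun x : ℝ => x) := Function.HasTemperateGrowth.id'
  obtain ⟨C, hC, h⟩ := S_bound (SchwartzMap.smulLeftCLM ℝ (fun x : ℝ => x) f)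
  refine ⟨(∫ y, ‖f y‖) + C, by positivity, fun z hz => ?_⟩
  have e : z * S f z = (∫ y : ℝ, (f y : ℂ)) + S (SchwartzMap.smulLeftCLM ℝ (fun x : ℝ => x) f) z := by
    unfold S
    simp only [div_eq_mul_inv]
    rw [← integral_const_mul, ← integral_add (int0 f) (int1 _ z hz)]
    congr 1; ext y
    rw [SchwartzMap.smulLeftCLM_apply ht]
    have := sub_ne z hz y
    simp only [smul_eq_mul, Complex.ofReal_mul]
    field_simp
    ring
  rw [← norm_mul, e]
  refine (norm_add_le _ _).trans (add_le_add ?_ (h z hz))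
  refine (norm_integral_le_integral_norm _).trans (le_of_eq ?_)
  simp

lemma S_lip (f : SchwartzMap ℝ ℝ) : ∃ C, 0 ≤ C ∧ ∀ z w : ℂ, 0 < z.im → 0 < w.im →
    ‖S f z - S f w‖ ≤ C * ‖z - w‖ := by
  obtain ⟨C, hC, h⟩ := S_bound (SchwartzMap.derivCLM ℝ ℝ f)
  refine ⟨C, hC, fun z w hz hw => ?_⟩
  exact Convex.norm_image_sub_le_of_norm_hasDerivWithin_le (s := {z : ℂ | 0 < z.im})
    (fun x hx => (S_deriv f x hx).hasDerivWithinAt) (fun x hx => h x hx)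
    (convex_halfSpace_im_gt 0) hw hz

/-- boundary values -/
lemma S_boundary (f : SchwartzMap ℝ ℝ) (x H : ℝ) (hH : HilbertAt (fun y => f y) x H) :
    Tendsto (fun δ : ℝ => S f (x + δ * Complex.I)) (nhdsWithin 0 (Ioi 0))
      (nhds (π * H - Complex.I * (π * f x))) := by
  obtain ⟨M, hM0, hM⟩ := schw_bdd f
  obtain ⟨L, hL0, hL⟩ := schw_lip f
  have hL' : ∀ s t : ℝ, ‖((f (x - s) : ℝ) : ℂ) - ((f (x - t) : ℝ) : ℂ)‖ ≤ L * |s - t| := by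
    intro s t
    rw [← Complex.ofReal_sub, Complex.norm_real]
    refine (hL _ _).trans (le_of_eq ?_)
    rw [show x - s - (x - t) = -(s - t) by ring, abs_neg]
  have hM' : ∀ s : ℝ, ‖((f (x - s) : ℝ) : ℂ)‖ ≤ M := by
    intro x; rw [Complex.norm_real]; exact hM _
  have hi := ((f.integrable (μ := volume)).comp_sub_left x).ofReal (𝕜 := ℂ)
  have hc : Continuous fun t => ((f (x - t) : ℝ) : ℂ) :=
    Complex.continuous_ofReal.comp (f.continuous.comp (by fun_prop))
  have h1 := cauchy_tendsto _ L M hL0 hL' hM' hc hi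
  have h2 := pv_tendsto _ L hL0 hL' hi
  have h3 : PVI (fun t => ((f (x - t) : ℝ) : ℂ)) = π * H := by
    refine tendsto_nhds_unique h2 ?_
    have h4 : Tendsto (fun ε : ℝ => ((π * ((1 / π) * ∫ y in {y : ℝ | ε < |x - y|}, f y / (x - y)) : ℝ) : ℂ))
        (nhdsWithin 0 (Ioi 0)) (nhds ((π * H : ℝ) : ℂ)) :=
      (Complex.continuous_ofReal.tendsto _).comp (hH.const_mul π)
    push_cast at h4
    refine h4.congr fun ε => ?_
    have hm : MeasurableSet {y : ℝ | ε < |x - y|} := measurableSet_lt measurable_const (by fun_prop)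
    rw [← integral_indicator (kset_m ε), ← integral_complex_ofReal, ← integral_indicator hm,
      ← integral_sub_left_eq_self _ volume x, ← mul_assoc]
    have : (π : ℂ) ≠ 0 := by exact_mod_cast Real.pi_ne_zero
    rw [mul_one_div_cancel this, one_mul]
    congr 1; ext t
    simp [indicator]
  rw [h3] at h1
  simp only [sub_zero] at h1
  refine h1.congr fun δ => ?_
  rw [S_eq]

lemma norm_sq_xd (x δ : ℝ) : ‖(x + δ * Complex.I : ℂ)‖ ^ 2 = x ^ 2 + δ ^ 2 := by
  rw [← Complex.normSq_eq_norm_sq, Complex.normSq_add_mul_I]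

lemma xd_im (x δ : ℝ) : (x + δ * Complex.I : ℂ).im = δ := by simp

lemma xd_ge (x δ : ℝ) : |δ| ≤ ‖(x + δ * Complex.I : ℂ)‖ := by
  have := Complex.abs_im_le_norm (x + δ * Complex.I : ℂ); rwa [xd_im] at this

lemma xd_ge' (x δ : ℝ) : |x| ≤ ‖(x + δ * Complex.I : ℂ)‖ := by
  have := Complex.abs_re_le_norm (x + δ * Complex.I : ℂ)
  simpa using this

lemma int_of_bound (f : ℝ → ℂ) (hm : AEStronglyMeasurable f) (K : ℝ)
    (h : ∀ x, (1 + x ^ 2) * ‖f x‖ ≤ K) : Integrable f := by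
  refine (integrable_inv_one_add_sq.const_mul K).mono' hm (Eventually.of_forall fun x => ?_)
  rw [← div_eq_mul_inv, le_div_iff₀ (by positivity), mul_comm]
  exact h x

lemma contour_int (H : ℂ → ℂ) (C : ℝ) (hd : ∀ z : ℂ, 0 < z.im → DifferentiableAt ℂ H z)
    (hb : ∀ z : ℂ, 0 < z.im → ‖z‖ ^ 3 * ‖H z‖ ≤ C) (δ : ℝ) (hδ : 0 < δ) :
    Integrable (fun x : ℝ => H (x + δ * Complex.I)) := by
  have hc : Continuous (fun x : ℝ => H (x + δ * Complex.I)) := by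
    rw [continuous_iff_continuousAt]
    intro x
    exact ContinuousAt.comp (f := fun x : ℝ => (x + δ * Complex.I : ℂ))
      (hd _ (by rw [xd_im]; exact hδ)).continuousAt (by fun_prop)
  refine int_of_bound _ hc.aestronglyMeasurable (C / δ ^ 3 + C / δ) fun x => ?_
  have h1 := hb (x + δ * Complex.I) (by rw [xd_im]; exact hδ)
  have h2 := xd_ge x δ
  have h3 := norm_sq_xd x δ
  rw [abs_of_pos hδ] at h2
  set n := ‖(x + δ * Complex.I : ℂ)‖
  set m := ‖H (x + δ * Complex.I)‖
  have hm : 0 ≤ m := norm_nonneg _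
  have hn : 0 < n := by linarith
  have a1 : m ≤ C / δ ^ 3 := by
    rw [le_div_iff₀ (by positivity), mul_comm]
    refine le_trans ?_ h1
    gcongr
  have a2 : x ^ 2 * m ≤ C / δ := by
    rw [le_div_iff₀ hδ]
    refine le_trans ?_ h1
    have : x ^ 2 ≤ n ^ 2 := by nlinarith
    calc x ^ 2 * m * δ ≤ n ^ 2 * m * n := by gcongr
      _ = n ^ 3 * m := by ring
  linarith

lemma contour (H : ℂ → ℂ) (C : ℝ) (hd : ∀ z : ℂ, 0 < z.im → DifferentiableAt ℂ H z)
    (hb : ∀ z : ℂ, 0 < z.im → ‖z‖ ^ 3 * ‖H z‖ ≤ C) (δ : ℝ) (hδ : 0 < δ) :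
    ∫ x : ℝ, H (x + δ * Complex.I) = 0 := by
  have hC : 0 ≤ C := by
    refine le_trans ?_ (hb Complex.I (by simp)); positivity
  have hi := contour_int H C hd hb δ hδ
  have h1 := intervalIntegral_tendsto_integral hi tendsto_neg_atTop_atBot tendsto_id
  refine tendsto_nhds_unique h1 ?_
  have hz : Tendsto (fun R : ℝ => 4 * C * (R ^ 2)⁻¹) atTop (nhds 0) := by
    have := (tendsto_pow_atTop (α := ℝ) (n := 2) (by norm_num)).inv_tendsto_atTop.const_mul (4 * C)
    simpa using this
  refine squeeze_zero_norm' ?_ hz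
  filter_upwards [eventually_gt_atTop 0] with R hR
  have hR' : ∀ z : ℂ, 0 < z.im → R ≤ ‖z‖ → ‖H z‖ ≤ C / R ^ 3 := by
    intro z hz hn
    rw [le_div_iff₀ (by positivity), mul_comm]
    refine le_trans ?_ (hb z hz)
    gcongr
  have hrect := Complex.integral_boundary_rect_eq_zero_of_differentiableOn H
    ⟨-R, δ⟩ ⟨R, R + δ⟩ ?_
  · simp only at hrect
    have t : ‖∫ x in (-R)..R, H (x + ((R + δ : ℝ) : ℂ) * Complex.I)‖ ≤ C / R ^ 3 * |R - -R| := by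
      refine intervalIntegral.norm_integral_le_of_norm_le_const fun x _ => ?_
      refine hR' _ (by rw [xd_im]; linarith) ?_
      refine le_trans ?_ (xd_ge x _)
      rw [abs_of_pos (by linarith)]; linarith
    have r : ‖∫ y in δ..(R + δ), H ((R : ℂ) + y * Complex.I)‖ ≤ C / R ^ 3 * |R + δ - δ| := by
      refine intervalIntegral.norm_integral_le_of_norm_le_const fun y hy => ?_
      rw [uIoc_of_le (by linarith)] at hy
      refine hR' _ (by rw [xd_im]; linarith [hy.1]) ?_
      refine le_trans ?_ (xd_ge' R _)
      exact le_abs_self R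
    have l : ‖∫ y in δ..(R + δ), H (((-R : ℝ) : ℂ) + y * Complex.I)‖ ≤ C / R ^ 3 * |R + δ - δ| := by
      refine intervalIntegral.norm_integral_le_of_norm_le_const fun y hy => ?_
      rw [uIoc_of_le (by linarith)] at hy
      refine hR' _ (by rw [xd_im]; linarith [hy.1]) ?_
      refine le_trans ?_ (xd_ge' (-R) _)
      rw [abs_neg]; exact le_abs_self R
    rw [show R - -R = 2 * R by ring, abs_of_pos (by linarith)] at t
    rw [show R + δ - δ = R by ring, abs_of_pos hR] at r l
    have e : ∫ x in (-R)..R, H (x + δ * Complex.I) =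
      (∫ x in (-R)..R, H (x + ((R + δ : ℝ) : ℂ) * Complex.I))
      - Complex.I • (∫ y in δ..(R + δ), H ((R : ℂ) + y * Complex.I))
      + Complex.I • ∫ y in δ..(R + δ), H (((-R : ℝ) : ℂ) + y * Complex.I) := by
      linear_combination hrect
    simp only [id]
    rw [e]
    refine (norm_add_le _ _).trans ?_
    refine (add_le_add_left (norm_sub_le _ _) _).trans ?_
    rw [norm_smul, norm_smul, Complex.norm_I, one_mul, one_mul]
    refine (add_le_add (add_le_add t r) l).trans (le_of_eq ?_)
    field_simp; ring
  · intro z hz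
    refine (hd z ?_).differentiableWithinAt
    have := hz.2
    simp only [mem_preimage] at this
    rw [uIcc_of_le (by linarith)] at this
    linarith [this.1]

lemma sq_sub_norm (a b : ℂ) : ‖a ^ 2 - b ^ 2‖ ≤ ‖a - b‖ * (‖a‖ + ‖b‖) := by
  rw [show a ^ 2 - b ^ 2 = (a - b) * (a + b) by ring, norm_mul]
  gcongr
  exact norm_add_le a b

theorem main_aux (g : SchwartzMap ℝ ℝ) (B : ℝ → ℂ)
    (hB : ∀ x : ℝ, Tendsto (fun δ : ℝ => S g (x + δ * Complex.I)) (nhdsWithin 0 (Ioi 0)) (nhds (B x))) :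
    Integrable (fun x => B x ^ 2) ∧
    Tendsto (fun δ : ℝ => ∫ t in {t : ℝ | δ < |t|}, B t ^ 2 / t) (nhdsWithin 0 (Ioi 0))
      (nhds (Complex.I * (π * B 0 ^ 2))) := by
  obtain ⟨C1, hC1, b1⟩ := S_bound g
  obtain ⟨C2, hC2, b2⟩ := S_decay g
  obtain ⟨C3, hC3, b3⟩ := S_lip g
  have B1 : ∀ x, ‖B x‖ ≤ C1 := fun x => by
    refine le_of_tendsto (hB x).norm ?_
    filter_upwards [self_mem_nhdsWithin] with δ hδ
    exact b1 _ (by rw [xd_im]; exact hδ)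
  have B2 : ∀ x, |x| * ‖B x‖ ≤ C2 := fun x => by
    refine le_of_tendsto ((hB x).norm.const_mul _) ?_
    filter_upwards [self_mem_nhdsWithin] with δ hδ
    refine le_trans ?_ (b2 (x + δ * Complex.I) (by rw [xd_im]; exact hδ))
    gcongr
    exact xd_ge' x δ
  have B3 : ∀ x y, ‖B x - B y‖ ≤ C3 * |x - y| := fun x y => by
    refine le_of_tendsto ((hB x).sub (hB y)).norm ?_
    filter_upwards [self_mem_nhdsWithin] with δ hδ
    refine (b3 _ _ (by rw [xd_im]; exact hδ) (by rw [xd_im]; exact hδ)).trans (le_of_eq ?_)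
    congr 1
    rw [add_sub_add_right_eq_sub, ← Complex.ofReal_sub, Complex.norm_real, norm_eq_abs]
  have B4 : ∀ x : ℝ, ∀ δ : ℝ, 0 < δ → ‖S g (x + δ * Complex.I) - B x‖ ≤ C3 * δ := fun x δ hδ => by
    refine le_of_tendsto ((hB x).const_sub _).norm ?_
    filter_upwards [self_mem_nhdsWithin, nhdsWithin_le_nhds (eventually_lt_nhds hδ)] with η hη h2
    have hη : 0 < η := hη
    refine (b3 _ _ (by rw [xd_im]; exact hδ) (by rw [xd_im]; exact hη)).trans ?_
    gcongr
    rw [add_sub_add_left_eq_sub, ← sub_mul, norm_mul, Complex.norm_I, mul_one,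
      ← Complex.ofReal_sub, Complex.norm_real, norm_eq_abs, abs_of_pos (by linarith)]
    linarith
  have Bc : Continuous B :=
    (LipschitzWith.of_dist_le' (K := C3) fun x y => by
      rw [dist_eq_norm, Real.dist_eq]; exact B3 x y).continuous
  have Gc : Continuous fun x => B x ^ 2 := Bc.pow 2
  have Gi : Integrable fun x => B x ^ 2 := by
    refine int_of_bound _ Gc.aestronglyMeasurable (C1 ^ 2 + C2 ^ 2) fun x => ?_
    have e : (1 + x ^ 2) * ‖B x ^ 2‖ = ‖B x‖ ^ 2 + (|x| * ‖B x‖) ^ 2 := by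
      rw [norm_pow, mul_pow, sq_abs]; ring
    rw [e]
    have := B1 x
    have := B2 x
    gcongr
  have GLip : ∀ x y, ‖B x ^ 2 - B y ^ 2‖ ≤ (C3 * (C1 + C1)) * |x - y| := fun x y => by
    refine (sq_sub_norm _ _).trans ?_
    have h1 := B1 x
    have h2 := B1 y
    have h3 := B3 x y
    calc _ ≤ C3 * |x - y| * (C1 + C1) := by gcongr
      _ = _ := by ring
  have GM : ∀ x, ‖B x ^ 2‖ ≤ C1 ^ 2 := fun x => by
    rw [norm_pow]; have := B1 x; gcongr
  have hL0 : 0 ≤ C3 * (C1 + C1) := by positivity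
  have T1 := cauchy_tendsto _ _ _ hL0 GLip GM Gc Gi
  have T2 := pv_tendsto _ _ hL0 GLip Gi
  refine ⟨Gi, ?_⟩
  -- contour
  have cd : ∀ z : ℂ, 0 < z.im → DifferentiableAt ℂ (fun z => S g z ^ 2 / z) z := fun z hz => by
    refine ((S_deriv g z hz).differentiableAt.pow 2).div differentiableAt_id ?_
    rintro h
    rw [h] at hz; simp at hz
  have cb : ∀ z : ℂ, 0 < z.im → ‖z‖ ^ 3 * ‖S g z ^ 2 / z‖ ≤ C2 ^ 2 := fun z hz => by
    have h0 : ‖z‖ ≠ 0 := by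
      intro h; rw [norm_eq_zero] at h; rw [h] at hz; simp at hz
    rw [norm_div, norm_pow]
    have := b2 z hz
    calc ‖z‖ ^ 3 * (‖S g z‖ ^ 2 / ‖z‖) = (‖z‖ * ‖S g z‖) ^ 2 := by field_simp
      _ ≤ _ := by gcongr
  have hzero : ∀ δ : ℝ, 0 < δ → ∫ x : ℝ, S g (x + δ * Complex.I) ^ 2 / (x + δ * Complex.I) = 0 :=
    contour _ _ cd cb
  have hSi := contour_int _ _ cd cb
  have hGi : ∀ δ : ℝ, 0 < δ → Integrable fun x : ℝ => B x ^ 2 / (x + δ * Complex.I) := by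
    intro δ hδ
    simp only [div_eq_mul_inv]
    refine Gi.mul_bdd (c := δ⁻¹) (Measurable.aestronglyMeasurable (by fun_prop))
      (Eventually.of_forall fun x => ?_)
    rw [norm_inv]
    have := xd_ge x δ
    rw [abs_of_pos hδ] at this
    gcongr
  have T3 : Tendsto (fun δ : ℝ => ∫ x : ℝ, (S g (x + δ * Complex.I) ^ 2 / (x + δ * Complex.I)
      - B x ^ 2 / (x + δ * Complex.I))) (nhdsWithin 0 (Ioi 0)) (nhds (∫ _ : ℝ, (0:ℂ))) := by
    refine tendsto_integral_filter_of_dominated_convergence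
      (fun x : ℝ => (2 * (C3 * (C1 + C1)) + 2 * C2 ^ 2) * (1 + x ^ 2)⁻¹) ?_ ?_
      (integrable_inv_one_add_sq.const_mul _) ?_
    · filter_upwards [self_mem_nhdsWithin] with δ hδ
      exact ((hSi δ hδ).sub (hGi δ hδ)).aestronglyMeasurable
    · filter_upwards [self_mem_nhdsWithin] with δ hδ
      have hδ : 0 < δ := hδ
      refine Eventually.of_forall fun x => ?_
      rw [← div_eq_mul_inv, le_div_iff₀ (by positivity), ← sub_div, norm_div]
      have hn1 := xd_ge x δ
      have hn2 := xd_ge' x δ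
      rw [abs_of_pos hδ] at hn1
      have p1 := b1 (x + δ * Complex.I) (by rw [xd_im]; exact hδ)
      have p2 := b2 (x + δ * Complex.I) (by rw [xd_im]; exact hδ)
      have q1 := B1 x
      have q2 := B2 x
      have q4 := B4 x δ hδ
      have p2' : |x| * ‖S g (x + δ * Complex.I)‖ ≤ C2 := by
        refine le_trans ?_ p2; gcongr
      have u := sq_sub_norm (S g (x + δ * Complex.I)) (B x)
      have v : ‖S g (x + δ * Complex.I) ^ 2 - B x ^ 2‖ ≤ ‖S g (x + δ * Complex.I)‖ ^ 2 + ‖B x‖ ^ 2 := by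
        refine (norm_sub_le _ _).trans (le_of_eq ?_)
        rw [norm_pow, norm_pow]
      set n := ‖(x + δ * Complex.I : ℂ)‖
      set s := ‖S g (x + δ * Complex.I)‖
      set b := ‖B x‖
      set E := ‖S g (x + δ * Complex.I) ^ 2 - B x ^ 2‖
      have hn : 0 < n := by linarith
      have hs : 0 ≤ s := norm_nonneg _
      have hb : 0 ≤ b := norm_nonneg _
      have hE : 0 ≤ E := norm_nonneg _
      have w1 : E / n ≤ C3 * (C1 + C1) := by
        rw [div_le_iff₀ hn]
        calc E ≤ _ := u
          _ ≤ (C3 * δ) * (C1 + C1) := by gcongr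
          _ = C3 * (C1 + C1) * δ := by ring
          _ ≤ _ := by gcongr
      have w2 : x ^ 2 * (E / n) ≤ C3 * (C1 + C1) + 2 * C2 ^ 2 := by
        by_cases hx : |x| ≤ 1
        · have : x ^ 2 ≤ 1 := by rw [← sq_abs]; exact pow_le_one₀ (abs_nonneg x) hx
          have : x ^ 2 * (E / n) ≤ E / n := mul_le_of_le_one_left (by positivity) this
          nlinarith [sq_nonneg C2]
        · push Not at hx
          have h3 : x ^ 2 * E ≤ 2 * C2 ^ 2 := by
            calc x ^ 2 * E ≤ x ^ 2 * (s ^ 2 + b ^ 2) := by gcongr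
              _ = (|x| * s) ^ 2 + (|x| * b) ^ 2 := by rw [mul_pow, mul_pow, sq_abs]; ring
              _ ≤ C2 ^ 2 + C2 ^ 2 := by gcongr
              _ = _ := by ring
          have h4 : E / n ≤ E := div_le_self hE (by linarith)
          have : x ^ 2 * (E / n) ≤ x ^ 2 * E := by gcongr
          linarith
      linarith
    · have h0 : ∀ᵐ x : ℝ, x ≠ 0 := by
        rw [ae_iff]; simp
      filter_upwards [h0] with x hx
      have hden : Tendsto (fun δ : ℝ => (x + δ * Complex.I : ℂ)) (nhdsWithin 0 (Ioi 0)) (nhds (x:ℂ)) := by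
        have : Continuous fun δ : ℝ => (x + δ * Complex.I : ℂ) := by fun_prop
        have := (this.tendsto 0).mono_left (nhdsWithin_le_nhds (s := Ioi 0))
        simpa using this
      have hx' : (x:ℂ) ≠ 0 := by exact_mod_cast hx
      have := (((hB x).pow 2).div hden hx').sub ((tendsto_const_nhds (x := B x ^ 2)).div hden hx')
      rw [sub_self] at this
      exact this
  have T4 : Tendsto (fun δ : ℝ => ∫ x : ℝ, B x ^ 2 / (x + δ * Complex.I)) (nhdsWithin 0 (Ioi 0)) (nhds 0) := by
    have := T3.neg
    simp only [integral_zero, neg_zero] at this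
    refine this.congr' ?_
    filter_upwards [self_mem_nhdsWithin] with δ hδ
    rw [integral_sub (hSi δ hδ) (hGi δ hδ), hzero δ hδ]; simp
  have e := tendsto_nhds_unique T1 T4
  rw [sub_eq_zero] at e
  rw [e] at T2
  exact T2

/-- For a Schwartz function `g`, the principal value integral
`PV ∫ Hg(x)·g(x)/x dx` exists and equals `(π/2)(g(0)² − Hg(0)²)`;
in particular, if `g(0) = 0` it equals `−(π/2)·Hg(0)²`. -/
theorem pv_integral_Hg_g_div_x (g : SchwartzMap ℝ ℝ) (Hg : ℝ → ℝ)
    (hH : ∀ x : ℝ, HilbertAt (fun y => g y) x (Hg x)) :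
    Filter.Tendsto
      (fun ε : ℝ => ∫ x in {x : ℝ | ε < |x|}, Hg x * g x / x)
      (nhdsWithin 0 (Set.Ioi 0))
      (nhds ((Real.pi / 2) * ((g 0)^2 - (Hg 0)^2))) ∧
    (g 0 = 0 →
      Filter.Tendsto
        (fun ε : ℝ => ∫ x in {x : ℝ | ε < |x|}, Hg x * g x / x)
        (nhdsWithin 0 (Set.Ioi 0))
        (nhds (-(Real.pi / 2) * (Hg 0)^2))) := by
  have key : Filter.Tendsto
      (fun ε : ℝ => ∫ x in {x : ℝ | ε < |x|}, Hg x * g x / x)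
      (nhdsWithin 0 (Set.Ioi 0))
      (nhds ((Real.pi / 2) * ((g 0)^2 - (Hg 0)^2))) := by
    obtain ⟨hi, hT⟩ := main_aux g (fun x => π * Hg x - Complex.I * (π * g x))
      (fun x => S_boundary g x (Hg x) (hH x))
    have h1 := ((Complex.continuous_im.tendsto _).comp hT).const_mul (-(2 * π ^ 2)⁻¹)
    have hpi : π ≠ 0 := Real.pi_ne_zero
    have e : -(2 * π ^ 2)⁻¹ * (Complex.I * (π * (π * Hg 0 - Complex.I * (π * g 0)) ^ 2)).im
        = (Real.pi / 2) * ((g 0)^2 - (Hg 0)^2) := by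
      simp [pow_two]
      field_simp
      ring
    rw [e] at h1
    refine h1.congr' ?_
    filter_upwards [self_mem_nhdsWithin] with δ hδ
    have hδ : 0 < δ := hδ
    have hint : Integrable (fun t : ℝ => (π * Hg t - Complex.I * (π * g t)) ^ 2 / (t : ℂ))
        (volume.restrict {t : ℝ | δ < |t|}) := by
      rw [← IntegrableOn, ← integrable_indicator_iff (kset_m δ)]
      refine (hi.mul_bdd (kT_m δ).aestronglyMeasurable (Eventually.of_forall (kT_b δ hδ))).congr
        (Eventually.of_forall fun t => ?_)
      simp only [kT, indicator]
      split_ifs <;> simp [div_eq_mul_inv]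
    have h2 := Complex.imCLM.integral_comp_comm hint
    simp only [Complex.imCLM_apply] at h2
    simp only [Function.comp_apply]
    rw [← h2, ← integral_const_mul]
    congr 1; ext t
    rw [Complex.div_ofReal_im]
    simp [pow_two]
    field_simp
    ring
  refine ⟨key, fun h0 => ?_⟩
  rw [h0] at key
  convert key using 2
  ring
end
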